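/- arXiv:1101.0182 — 7 statements merged into one kernel-verified Lean document; each statement's English description precedes it below -/
import Mathlib

section
/- Let q = q(n) < log(n)/n and let γ = γ(n) satisfy 1/(log log n) ≤ γ ≤ 1. Then with probability 1 − o(n^{−1}), the random digraph D_{n,q} has the following property: for every vertex set S₀ with |S₀| ≤ (1/3)·n^{1−γ} and every chain S₀ ⊆ S₁ ⊆ ⋯ ⊆ S_T in which each S_{t+1} is obtained from S_t by adding a single vertex v ∉ S_t having at least 3 out-neighbors in S_t, every set in the chain has fewer than n^{1−γ} vertices. -/
open MeasureTheory Filter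

/-- The Bernoulli measure on `Bool` with success probability `p` (clamped into `[0,1]`;
for `0 ≤ p ≤ 1` this is the genuine Bernoulli measure). -/
noncomputable def bernoulliM (p : ℝ) : Measure Bool :=
  (PMF.bernoulli (min (Real.toNNReal p) 1) (min_le_right _ _)).toMeasure

instance (p : ℝ) : IsProbabilityMeasure (bernoulliM p) := by
  unfold bernoulliM; infer_instance

/-- The random digraph `D_{n,p}`: each ordered pair of distinct vertices of `Fin n` is
independently a directed edge with probability `p` (the diagonal coordinates are sampled
but never consulted). -/
noncomputable def dnp (n : ℕ) (p : ℝ) : Measure (Fin n × Fin n → Bool) :=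
  Measure.pi fun _ => bernoulliM p

/-- `S` is, up to time `T`, a chain in which each `S (t+1)` is obtained from `S t` by
adding a single vertex `v ∉ S t` having at least `3` out-neighbors (in the digraph `ω`)
inside `S t`. -/
def IsGrowthChain3 {n : ℕ} (ω : Fin n × Fin n → Bool) (S : ℕ → Finset (Fin n))
    (T : ℕ) : Prop :=
  ∀ t < T, ∃ v ∉ S t,
    3 ≤ ((S t).filter fun w => w ≠ v ∧ ω (v, w) = true).card ∧
    S (t + 1) = insert v (S t)

lemma gc_card {n : ℕ} {ω : Fin n × Fin n → Bool} {S : ℕ → Finset (Fin n)} {T : ℕ}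
    (h : IsGrowthChain3 ω S T) : ∀ t ≤ T, (S t).card = (S 0).card + t ∧
      3 * t ≤ ((S t ×ˢ S t).filter fun e => ω e = true).card := by
  intro t
  induction t with
  | zero => intro _; simp
  | succ t ih =>
    intro ht
    obtain ⟨h1, h2⟩ := ih (by omega)
    obtain ⟨v, hv, h3, h4⟩ := h t (by omega)
    refine ⟨?_, ?_⟩
    · rw [h4, Finset.card_insert_of_notMem hv, h1]; ring
    · rw [h4]
      have hsub : ((S t ×ˢ S t).filter fun e => ω e = true) ∪
          (((S t).filter fun w => w ≠ v ∧ ω (v, w) = true).image fun w => (v, w)) ⊆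
          ((insert v (S t) ×ˢ insert v (S t)).filter fun e => ω e = true) := by
        intro e he
        simp only [Finset.mem_union, Finset.mem_filter, Finset.mem_product, Finset.mem_image,
          Finset.mem_insert] at he ⊢
        rcases he with he | ⟨w, hw, rfl⟩
        · exact ⟨⟨Or.inr he.1.1, Or.inr he.1.2⟩, he.2⟩
        · exact ⟨⟨Or.inl rfl, Or.inr hw.1⟩, hw.2.2⟩
      have hdisj : Disjoint ((S t ×ˢ S t).filter fun e => ω e = true)
          (((S t).filter fun w => w ≠ v ∧ ω (v, w) = true).image fun w => (v, w)) := by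
        rw [Finset.disjoint_left]
        intro e he he'
        simp only [Finset.mem_filter, Finset.mem_product, Finset.mem_image] at he he'
        obtain ⟨w, _, rfl⟩ := he'
        exact hv he.1.1
      have := Finset.card_le_card hsub
      rw [Finset.card_union_of_disjoint hdisj, Finset.card_image_of_injective _
        (fun a b hab => by simpa using hab)] at this
      omega

/-- the chain event gives a dense set -/
lemma gc_dense {n : ℕ} {ω : Fin n × Fin n → Bool} {S : ℕ → Finset (Fin n)} {T : ℕ} {N : ℝ}
    (hN : 0 < N) (h0 : ((S 0).card : ℝ) ≤ 1 / 3 * N)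
    (h : IsGrowthChain3 ω S T) {t : ℕ} (ht : t ≤ T) (hb : N ≤ (S t).card) :
    9 ≤ ⌈N⌉₊ ∧ ∃ A : Finset (Fin n), A.card = ⌈N⌉₊ ∧
      ∃ F ∈ Finset.powersetCard (2 * ⌈N⌉₊) (A ×ˢ A), ∀ e ∈ F, ω e = true := by
  set s := ⌈N⌉₊ with hs
  have hNs : N ≤ s := Nat.le_ceil N
  have hs1 : 1 ≤ s := Nat.one_le_ceil_iff.mpr hN
  have h30 : 3 * (S 0).card ≤ s := by
    have : (3 * (S 0).card : ℝ) ≤ s := by linarith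
    exact_mod_cast this
  have hst : s ≤ (S t).card := Nat.ceil_le.mpr hb
  have hct := (gc_card h t ht).1
  set t' := s - (S 0).card with ht'
  have ht'T : t' ≤ T := by omega
  obtain ⟨hc, he⟩ := gc_card h t' ht'T
  have hS0 : 3 ≤ (S 0).card := by
    obtain ⟨v, _, h3, _⟩ := h 0 (by omega)
    exact h3.trans (Finset.card_filter_le _ _)
  refine ⟨by omega, S t', by omega, ?_⟩
  obtain ⟨F, hF, hFc⟩ := Finset.exists_subset_card_eq (show 2 * s ≤ _ by omega : 2 * s ≤ ((S t' ×ˢ S t').filter fun e => ω e = true).card)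
  refine ⟨F, ?_, fun e heF => (Finset.mem_filter.mp (hF heF)).2⟩
  rw [Finset.mem_powersetCard]
  exact ⟨hF.trans (Finset.filter_subset _ _), hFc⟩

lemma bernoulliM_true (p : ℝ) : bernoulliM p {true} ≤ ENNReal.ofReal p := by
  unfold bernoulliM
  rw [PMF.toMeasure_apply_singleton _ _ (measurableSet_singleton _)]
  have h : (PMF.bernoulli (min (Real.toNNReal p) 1) (min_le_right _ _)) true =
      ((min (Real.toNNReal p) 1 : NNReal) : ENNReal) := rfl
  rw [h, ENNReal.ofReal]
  exact_mod_cast min_le_left _ _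

lemma dnp_all (n : ℕ) (p : ℝ) (F : Finset (Fin n × Fin n)) :
    dnp n p {ω | ∀ e ∈ F, ω e = true} ≤ ENNReal.ofReal p ^ F.card := by
  have : {ω : Fin n × Fin n → Bool | ∀ e ∈ F, ω e = true} =
      Set.univ.pi fun e => if e ∈ F then {true} else Set.univ := by
    ext ω
    simp only [Set.mem_ofPred_eq, Set.mem_pi, Set.mem_univ, true_implies]
    refine forall_congr' fun e => ?_
    by_cases he : e ∈ F <;> simp [he]
  rw [this, dnp, Measure.pi_pi]
  calc ∏ e, bernoulliM p (if e ∈ F then {true} else Set.univ)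
      ≤ ∏ e, (if e ∈ F then ENNReal.ofReal p else 1) := by
        refine Finset.prod_le_prod' fun e _ => ?_
        by_cases he : e ∈ F
        · simpa [he] using bernoulliM_true p
        · rw [if_neg he, if_neg he]; exact prob_le_one
    _ = ENNReal.ofReal p ^ F.card := by
        rw [Finset.prod_ite_mem]; simp

lemma bad_le (n : ℕ) (p N : ℝ) (hp : 0 ≤ p) (hN : 0 < N) :
    (dnp n p {ω | ¬ ∀ (S : ℕ → Finset (Fin n)) (T : ℕ),
              ((S 0).card : ℝ) ≤ 1 / 3 * N →
              IsGrowthChain3 ω S T →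
              ∀ t ≤ T, ((S t).card : ℝ) < N}).toReal ≤
      if 9 ≤ ⌈N⌉₊ then (n.choose ⌈N⌉₊ : ℝ) * ((⌈N⌉₊ * ⌈N⌉₊).choose (2 * ⌈N⌉₊) : ℝ) * p ^ (2 * ⌈N⌉₊)
      else 0 := by
  set s := ⌈N⌉₊ with hs
  split_ifs with h9
  · have hsub : {ω : Fin n × Fin n → Bool | ¬ ∀ (S : ℕ → Finset (Fin n)) (T : ℕ),
              ((S 0).card : ℝ) ≤ 1 / 3 * N →
              IsGrowthChain3 ω S T →
              ∀ t ≤ T, ((S t).card : ℝ) < N} ⊆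
        ⋃ A ∈ Finset.powersetCard s (Finset.univ : Finset (Fin n)),
          ⋃ F ∈ Finset.powersetCard (2 * s) (A ×ˢ A), {ω | ∀ e ∈ F, ω e = true} := by
      intro ω hω
      simp only [Set.mem_ofPred_eq] at hω
      push Not at hω
      obtain ⟨S, T, h0, h, t, ht, hb⟩ := hω
      obtain ⟨_, A, hA, F, hF, hall⟩ := gc_dense hN h0 h ht hb
      simp only [Set.mem_iUnion]
      exact ⟨A, by simp [Finset.mem_powersetCard, hA, hs], F, hF, hall⟩
    have hle : dnp n p {ω | ¬ ∀ (S : ℕ → Finset (Fin n)) (T : ℕ),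
              ((S 0).card : ℝ) ≤ 1 / 3 * N →
              IsGrowthChain3 ω S T →
              ∀ t ≤ T, ((S t).card : ℝ) < N} ≤
        (n.choose s) * (((s * s).choose (2 * s)) * ENNReal.ofReal p ^ (2 * s)) := by
      refine (measure_mono hsub).trans ?_
      refine (measure_biUnion_finset_le _ _).trans ?_
      refine (Finset.sum_le_card_nsmul _ _
        (((s * s).choose (2 * s)) * ENNReal.ofReal p ^ (2 * s)) ?_).trans ?_
      · intro A hA
        refine (measure_biUnion_finset_le _ _).trans ?_
        refine (Finset.sum_le_card_nsmul _ _ (ENNReal.ofReal p ^ (2 * s)) ?_).trans ?_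
        · intro F hF
          have := dnp_all n p F
          rwa [(Finset.mem_powersetCard.mp hF).2] at this
        · rw [Finset.card_powersetCard, Finset.card_product, (Finset.mem_powersetCard.mp hA).2]
          simp
      · rw [Finset.card_powersetCard]; simp
    have := ENNReal.toReal_mono (by finiteness) hle
    refine this.trans (le_of_eq ?_)
    simp [ENNReal.toReal_ofReal hp, mul_assoc]
  · refine le_of_eq ?_
    have : {ω : Fin n × Fin n → Bool | ¬ ∀ (S : ℕ → Finset (Fin n)) (T : ℕ),
              ((S 0).card : ℝ) ≤ 1 / 3 * N →
              IsGrowthChain3 ω S T →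
              ∀ t ≤ T, ((S t).card : ℝ) < N} = ∅ := by
      ext ω
      simp only [Set.mem_ofPred_eq, Set.mem_empty_iff_false, iff_false, not_not]
      intro S T h0 h t ht
      by_contra hb
      exact h9 (gc_dense hN h0 h ht (not_lt.mp hb)).1
    rw [this]; simp

lemma choose_bd (m k : ℕ) (hk : 0 < k) : (m.choose k : ℝ) ≤ (Real.exp 1 * m / k) ^ k := by
  have h1 : (m.choose k : ℝ) ≤ (m : ℝ) ^ k / k.factorial := Nat.choose_le_pow_div k m
  have h2 : (k : ℝ) ^ k / k.factorial ≤ Real.exp k := Real.pow_div_factorial_le_exp k (by positivity) k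
  have hk' : (0 : ℝ) < k := by exact_mod_cast hk
  have hf : (0 : ℝ) < k.factorial := by exact_mod_cast k.factorial_pos
  refine h1.trans ?_
  rw [div_pow, mul_pow, ← Real.exp_nat_mul, mul_one, div_le_div_iff₀ hf (by positivity)]
  rw [div_le_iff₀ hf] at h2
  nlinarith [pow_nonneg (Nat.cast_nonneg m : (0:ℝ) ≤ m) k]

lemma count_bd (n s : ℕ) (p L : ℝ) (hn : 0 < n) (hs : 0 < s) (hp : 0 ≤ p) (hpL : p ≤ L / n) :
    (n.choose s : ℝ) * ((s * s).choose (2 * s) : ℝ) * p ^ (2 * s) ≤ (6 * s * L ^ 2 / n) ^ s := by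
  have hn' : (0 : ℝ) < n := by exact_mod_cast hn
  have hs' : (0 : ℝ) < s := by exact_mod_cast hs
  have h1 := choose_bd n s hs
  have h2 := choose_bd (s * s) (2 * s) (by omega)
  have h3 : p ^ (2 * s) ≤ (L / n) ^ (2 * s) := by gcongr
  have he : Real.exp 1 ^ 3 ≤ 24 := by
    have := Real.exp_one_lt_d9
    have h0 := Real.exp_pos 1
    calc Real.exp 1 ^ 3 ≤ 2.72 ^ 3 := by gcongr; linarith
      _ ≤ 24 := by norm_num
  calc (n.choose s : ℝ) * ((s * s).choose (2 * s) : ℝ) * p ^ (2 * s)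
      ≤ (Real.exp 1 * n / s) ^ s * (Real.exp 1 * (s * s : ℕ) / (2 * s : ℕ)) ^ (2 * s)
          * (L / n) ^ (2 * s) := by gcongr
    _ = (Real.exp 1 ^ 3 / 4 * (s * L ^ 2 / n)) ^ s := by
        rw [pow_mul, pow_mul, ← mul_pow, ← mul_pow]
        congr 1
        push_cast
        field_simp
        ring
    _ ≤ (6 * s * L ^ 2 / n) ^ s := by
        have : (0:ℝ) ≤ s * L ^ 2 / n := by positivity
        gcongr
        calc _ ≤ 6 * (s * L ^ 2 / n) := by gcongr; linarith
          _ = _ := by ring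

lemma ev_analytic : ∀ᶠ x : ℝ in atTop,
    6 * Real.log x ^ 2 / Real.sqrt x ≤ x ^ (-(1/4) : ℝ) ∧
    12 * Real.log x ^ 2 * Real.exp (- (Real.log x / Real.log (Real.log x))) ≤ Real.exp (-1) ∧
    Real.exp (- Real.sqrt x) ≤ x ^ (-2 : ℝ) ∧ 1 ≤ x ∧ 1 ≤ Real.log x := by
  have e1 : ∀ᶠ x : ℝ in atTop, 6 * Real.log x ^ 2 / Real.sqrt x ≤ x ^ (-(1/4) : ℝ) := by
    have h := (isLittleO_log_rpow_rpow_atTop 2 (show (0:ℝ) < 1/4 by norm_num)).bound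
      (show (0:ℝ) < 1/6 by norm_num)
    filter_upwards [h, eventually_gt_atTop 1] with x hx hx1
    have hx0 : 0 < x := by linarith
    rw [Real.rpow_two, Real.norm_of_nonneg (by positivity), Real.norm_of_nonneg (by positivity)] at hx
    rw [Real.sqrt_eq_rpow, div_le_iff₀ (by positivity), ← Real.rpow_add hx0]
    norm_num at hx ⊢
    linarith
  have e3 : ∀ᶠ x : ℝ in atTop, Real.exp (- Real.sqrt x) ≤ x ^ (-2 : ℝ) := by
    have h := (isLittleO_log_rpow_atTop (show (0:ℝ) < 1/2 by norm_num)).bound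
      (show (0:ℝ) < 1/2 by norm_num)
    filter_upwards [h, eventually_gt_atTop 1] with x hx hx1
    have hx0 : 0 < x := by linarith
    have hl := Real.log_pos hx1
    rw [Real.norm_of_nonneg (by positivity), Real.norm_of_nonneg (by positivity), ← Real.sqrt_eq_rpow] at hx
    rw [Real.rpow_def_of_pos hx0]
    apply Real.exp_le_exp.mpr
    linarith
  have e2 : ∀ᶠ y : ℝ in atTop, 12 * y ^ 2 * Real.exp (- (y / Real.log y)) ≤ Real.exp (-1) := by
    -- log y ≤ y^(1/2), then y / log y ≥ sqrt y
    have h := (isLittleO_log_rpow_atTop (show (0:ℝ) < 1/2 by norm_num)).bound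
      (show (0:ℝ) < 1/6 by norm_num)
    filter_upwards [h, eventually_ge_atTop (Real.exp 4)] with y hy hy1
    have hy0 : 0 < y := (Real.exp_pos 4).trans_le hy1
    have hl : 4 ≤ Real.log y := (Real.le_log_iff_exp_le hy0).mpr hy1
    rw [Real.norm_of_nonneg (by positivity), Real.norm_of_nonneg (by positivity), ← Real.sqrt_eq_rpow] at hy
    have h36 : 36 * Real.log y ^ 2 ≤ y := by
      have : (6 * Real.log y) ^ 2 ≤ (Real.sqrt y) ^ 2 := by gcongr; linarith
      rw [Real.sq_sqrt hy0.le] at this; linarith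
    have hd : 36 * Real.log y ≤ y / Real.log y := by
      rw [le_div_iff₀ (by linarith)]; nlinarith
    have h12 : (12 : ℝ) ≤ Real.exp 11 := by
      have := Real.add_one_le_exp (11:ℝ); linarith
    have hy2 : y ^ 2 = Real.exp (2 * Real.log y) := by
      rw [two_mul, Real.exp_add, Real.exp_log hy0]; ring
    calc 12 * y ^ 2 * Real.exp (- (y / Real.log y))
        ≤ Real.exp 11 * Real.exp (2 * Real.log y) * Real.exp (- (y / Real.log y)) := by
          rw [hy2]; gcongr
      _ = Real.exp (11 + 2 * Real.log y - y / Real.log y) := by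
          rw [← Real.exp_add, ← Real.exp_add]; ring_nf
      _ ≤ Real.exp (-1) := Real.exp_le_exp.mpr (by linarith)
  filter_upwards [e1, Real.tendsto_log_atTop.eventually e2, e3, eventually_ge_atTop 1,
    Real.tendsto_log_atTop.eventually (eventually_ge_atTop 1)] with x h1 h2 h3 h4 h5
  exact ⟨h1, h2, h3, h4, h5⟩

/-- For `q = q(n) < log n / n` and `1/(log log n) ≤ γ = γ(n) ≤ 1`, with
probability `1 - o(n⁻¹)` the digraph `D_{n,q}` has the property that any growth chain
(adding vertices with at least 3 out-neighbors in the current set) started from a set of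
size at most `(1/3)·n^{1-γ}` consists entirely of sets of fewer than `n^{1-γ}` vertices. -/
theorem growth_chain_small_whp (q γ : ℕ → ℝ)
    (hq : ∀ᶠ n : ℕ in atTop, 0 ≤ q n ∧ q n < Real.log n / n)
    (hγ : ∀ᶠ n : ℕ in atTop, 1 / Real.log (Real.log n) ≤ γ n ∧ γ n ≤ 1) :
    Tendsto
      (fun n : ℕ =>
        (n : ℝ) *
          (dnp n (q n) {ω | ¬ ∀ (S : ℕ → Finset (Fin n)) (T : ℕ),
              ((S 0).card : ℝ) ≤ 1 / 3 * (n : ℝ) ^ (1 - γ n) →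
              IsGrowthChain3 ω S T →
              ∀ t ≤ T, ((S t).card : ℝ) < (n : ℝ) ^ (1 - γ n)}).toReal)
      atTop (nhds 0) := by
  have hT : Tendsto (fun n : ℕ => ((n : ℝ))⁻¹) atTop (nhds 0) := tendsto_inv_atTop_nhds_zero_nat
  refine squeeze_zero' (Eventually.of_forall fun n => by positivity) ?_ hT
  have hA := tendsto_natCast_atTop_atTop.eventually ev_analytic
  filter_upwards [hq, hγ, hA] with n ⟨hq0, hq1⟩ ⟨hγ0, hγ1⟩ ⟨a1, a2, a3, a4, a5⟩
  have hn : (0 : ℝ) < n := by linarith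
  have hN : (0 : ℝ) < (n : ℝ) ^ (1 - γ n) := by positivity
  have hN1 : (1 : ℝ) ≤ (n : ℝ) ^ (1 - γ n) := Real.one_le_rpow a4 (by linarith)
  have key : (dnp n (q n) {ω | ¬ ∀ (S : ℕ → Finset (Fin n)) (T : ℕ),
              ((S 0).card : ℝ) ≤ 1 / 3 * (n : ℝ) ^ (1 - γ n) →
              IsGrowthChain3 ω S T →
              ∀ t ≤ T, ((S t).card : ℝ) < (n : ℝ) ^ (1 - γ n)}).toReal ≤ (n : ℝ) ^ (-2 : ℝ) := by
    refine (bad_le n (q n) _ hq0 hN).trans ?_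
    split_ifs with h9
    swap
    · positivity
    set s := ⌈(n : ℝ) ^ (1 - γ n)⌉₊ with hs
    refine (count_bd n s (q n) (Real.log n) (by exact_mod_cast hn) (by omega) hq0 hq1.le).trans ?_
    have hx0 : 0 ≤ 6 * (s : ℝ) * Real.log n ^ 2 / n := by positivity
    by_cases hsn : (s : ℝ) ≤ Real.sqrt n
    · have hx : 6 * (s : ℝ) * Real.log n ^ 2 / n ≤ (n : ℝ) ^ (-(1/4) : ℝ) := by
        refine le_trans ?_ a1
        have hsq : 0 < Real.sqrt n := Real.sqrt_pos.mpr hn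
        rw [div_le_div_iff₀ hn hsq]
        have h2 : Real.sqrt n * Real.sqrt n = n := Real.mul_self_sqrt hn.le
        have : (s : ℝ) * Real.sqrt n ≤ n := by nlinarith
        calc 6 * (s : ℝ) * Real.log n ^ 2 * Real.sqrt n
            = 6 * Real.log n ^ 2 * (s * Real.sqrt n) := by ring
          _ ≤ 6 * Real.log n ^ 2 * n := by gcongr
      have hle1 : (n : ℝ) ^ (-(1/4) : ℝ) ≤ 1 := Real.rpow_le_one_of_one_le_of_nonpos a4 (by norm_num)
      calc (6 * (s : ℝ) * Real.log n ^ 2 / n) ^ s ≤ ((n : ℝ) ^ (-(1/4) : ℝ)) ^ s := by gcongr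
        _ ≤ ((n : ℝ) ^ (-(1/4) : ℝ)) ^ 8 := pow_le_pow_of_le_one (by positivity) hle1 (by omega)
        _ = (n : ℝ) ^ (-2 : ℝ) := by
            rw [← Real.rpow_natCast, ← Real.rpow_mul hn.le]; norm_num
    · push Not at hsn
      have hs2 : (s : ℝ) ≤ 2 * (n : ℝ) ^ (1 - γ n) := by
        have := Nat.ceil_lt_add_one hN.le
        linarith
      have hNn : (n : ℝ) ^ (1 - γ n) ≤ n * Real.exp (- (Real.log n / Real.log (Real.log n))) := by
        rw [Real.rpow_sub hn, Real.rpow_one, div_eq_mul_inv, ← Real.rpow_neg hn.le,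
          Real.rpow_def_of_pos hn]
        gcongr
        have : Real.log n * (1 / Real.log (Real.log n)) ≤ Real.log n * γ n := by gcongr
        rw [mul_one_div] at this
        linarith
      have hx : 6 * (s : ℝ) * Real.log n ^ 2 / n ≤ Real.exp (-1) := by
        refine le_trans ?_ a2
        rw [div_le_iff₀ hn]
        have : (s : ℝ) ≤ 2 * (n * Real.exp (- (Real.log n / Real.log (Real.log n)))) := by linarith
        calc 6 * (s : ℝ) * Real.log n ^ 2 ≤ 6 * (2 * (n * Real.exp (- (Real.log n / Real.log (Real.log n))))) * Real.log n ^ 2 := by gcongr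
          _ = _ := by ring
      calc (6 * (s : ℝ) * Real.log n ^ 2 / n) ^ s ≤ (Real.exp (-1)) ^ s := by gcongr
        _ = Real.exp (- s) := by rw [← Real.exp_nat_mul]; simp
        _ ≤ Real.exp (- Real.sqrt n) := Real.exp_le_exp.mpr (by linarith)
        _ ≤ _ := a3
  calc _ ≤ (n : ℝ) * (n : ℝ) ^ (-2 : ℝ) := by gcongr
    _ = (n : ℝ)⁻¹ := by
      rw [Real.rpow_neg hn.le, Real.rpow_two]; field_simp
end

section
/- With probability 1 − o(n^{−1}), the following holds: either |S₀| > (1/3)·n^{1−γ}, or every set S obtained from S₀ by repeatedly adding a vertex v outside the current set that has at least 4 out-neighbors in the current set in at least one of the digraphs D₁, D₂, D₃ (continuing until no such vertex exists, regardless of the order in which vertices are added) satisfies |S| ≤ n^{1−γ}. Here γ = min(1/4, ε₁θ₁/4, ε₃θ₃/4). -/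
open MeasureTheory Filter

/-- `ε₁ = ε₂ = ε₃ = ε/3`. -/
noncomputable def eps1 (ε : ℝ) : ℝ := ε / 3

/-- `θ₁ = θ₃ = min(θ/3, ε₂/4)`. -/
noncomputable def th1 (ε θ : ℝ) : ℝ := min (θ / 3) (eps1 ε / 4)

/-- `θ₂ = θ - θ₁ - θ₃`. -/
noncomputable def th2 (ε θ : ℝ) : ℝ := θ - th1 ε θ - th1 ε θ

/-- `q₁ = p₁·θ₁/(1+θ)` with `p₁ = ε₁·log n/(2n)`. -/
noncomputable def q1 (n : ℕ) (ε θ : ℝ) : ℝ :=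
  eps1 ε * Real.log n / (2 * n) * (th1 ε θ / (1 + θ))

/-- `q₂ = p₂·(1+θ₂)/(1+θ)` with `p₂ = (1+ε₂)·log n/(2n)`. -/
noncomputable def q2 (n : ℕ) (ε θ : ℝ) : ℝ :=
  (1 + eps1 ε) * Real.log n / (2 * n) * ((1 + th2 ε θ) / (1 + θ))

/-- `q₃ = p₃·θ₃/(1+θ)` with `p₃ = ε₃·log n/(2n)`; since `ε₃ = ε₁` and `θ₃ = θ₁` this
coincides with `q₁`. -/
noncomputable def q3 (n : ℕ) (ε θ : ℝ) : ℝ :=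
  eps1 ε * Real.log n / (2 * n) * (th1 ε θ / (1 + θ))

/-- `γ = min(1/4, ε₁θ₁/4, ε₃θ₃/4)`. -/
noncomputable def gamParam (ε θ : ℝ) : ℝ :=
  min (1 / 4) (min (eps1 ε * th1 ε θ / 4) (eps1 ε * th1 ε θ / 4))

/-- Three mutually independent digraphs `D₁ ~ D_{n,q₁}`, `D₂ ~ D_{n,q₂}`, `D₃ ~ D_{n,q₃}`. -/
noncomputable def tripleM (n : ℕ) (ε θ : ℝ) :
    Measure ((Fin n × Fin n → Bool) × (Fin n × Fin n → Bool) × (Fin n × Fin n → Bool)) :=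
  (dnp n (q1 n ε θ)).prod ((dnp n (q2 n ε θ)).prod (dnp n (q3 n ε θ)))

/-- Out-degree `d⁺(v)` of `v` in the digraph `D`. -/
def outdeg {n : ℕ} (D : Fin n × Fin n → Bool) (v : Fin n) : ℕ :=
  (Finset.univ.filter fun w => w ≠ v ∧ D (v, w) = true).card

open scoped Classical in
/-- `S₀ = S_{0,1} ∪ S_{0,2} ∪ S_{0,3}`: the vertices of small out-degree in `D₁`, `D₂`
or `D₃` respectively. -/
noncomputable def lowDegSet (n : ℕ) (ε θ : ℝ)
    (ω : (Fin n × Fin n → Bool) × (Fin n × Fin n → Bool) × (Fin n × Fin n → Bool)) :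
    Finset (Fin n) :=
  Finset.univ.filter fun v =>
    (outdeg ω.1 v : ℝ) ≤ eps1 ε * th1 ε θ / 20 * Real.log n ∨
    (outdeg ω.2.1 v : ℝ) ≤ 1 / 20 * Real.log n ∨
    (outdeg ω.2.2 v : ℝ) ≤ eps1 ε * th1 ε θ / 20 * Real.log n


/-- `v ∉ A` has at least `4` out-neighbors inside `A` in one of the three digraphs. -/
def CanGrow4 {n : ℕ}
    (ω : (Fin n × Fin n → Bool) × (Fin n × Fin n → Bool) × (Fin n × Fin n → Bool))
    (A : Finset (Fin n)) (v : Fin n) : Prop :=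
  4 ≤ (A.filter fun w => w ≠ v ∧ ω.1 (v, w) = true).card ∨
  4 ≤ (A.filter fun w => w ≠ v ∧ ω.2.1 (v, w) = true).card ∨
  4 ≤ (A.filter fun w => w ≠ v ∧ ω.2.2 (v, w) = true).card


open Classical in
lemma bern_true_le (p Q : ℝ) (h : p ≤ Q) : bernoulliM p {true} ≤ ENNReal.ofReal Q := by
  unfold bernoulliM
  rw [PMF.toMeasure_apply_singleton _ _ (MeasurableSet.singleton _)]
  simp only [PMF.bernoulli_apply, cond_true, ENNReal.ofReal]
  exact_mod_cast le_trans (min_le_left _ _) (Real.toNNReal_le_toNNReal h)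

open Classical in
lemma dnp_all_le (n : ℕ) (p Q : ℝ) (h : p ≤ Q) (E : Finset (Fin n × Fin n)) :
    dnp n p {D | ∀ e ∈ E, D e = true} ≤ ENNReal.ofReal Q ^ E.card := by
  have hs : {D : Fin n × Fin n → Bool | ∀ e ∈ E, D e = true} =
      Set.pi Set.univ (fun e => if e ∈ E then {true} else Set.univ) := by
    ext D
    simp only [Set.mem_setOf_eq, Set.mem_pi, Set.mem_univ, true_imp_iff]
    refine forall_congr' fun e => ?_
    by_cases he : e ∈ E <;> simp [he]
  rw [hs, dnp, Measure.pi_pi]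
  have : ∀ e : Fin n × Fin n, bernoulliM p (if e ∈ E then {true} else Set.univ) =
      if e ∈ E then bernoulliM p {true} else 1 := by
    intro e
    split_ifs
    · rfl
    · exact measure_univ
  simp only [this]
  rw [Finset.prod_ite_mem, Finset.univ_inter, Finset.prod_const]
  exact pow_le_pow_left₀ (zero_le) (bern_true_le p Q h) _

/-- the `i`-th digraph -/
def pickD {n : ℕ}
    (ω : (Fin n × Fin n → Bool) × (Fin n × Fin n → Bool) × (Fin n × Fin n → Bool))
    (i : Fin 3) : Fin n × Fin n → Bool := ![ω.1, ω.2.1, ω.2.2] i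

open Classical in
lemma triple_all_le (n : ℕ) (ε θ Q : ℝ) (h1 : q1 n ε θ ≤ Q) (h2 : q2 n ε θ ≤ Q)
    (h3 : q3 n ε θ ≤ Q) (E : Finset (Fin 3 × (Fin n × Fin n))) :
    tripleM n ε θ {ω | ∀ x ∈ E, pickD ω x.1 x.2 = true} ≤ ENNReal.ofReal Q ^ E.card := by
  let F : Fin 3 → Finset (Fin n × Fin n) := fun i => Finset.univ.filter fun e => (i, e) ∈ E
  have hs : {ω : (Fin n × Fin n → Bool) × (Fin n × Fin n → Bool) × (Fin n × Fin n → Bool) |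
      ∀ x ∈ E, pickD ω x.1 x.2 = true} =
      {D | ∀ e ∈ F 0, D e = true} ×ˢ ({D | ∀ e ∈ F 1, D e = true} ×ˢ
        {D | ∀ e ∈ F 2, D e = true}) := by
    ext ω
    simp only [Set.mem_setOf_eq, Set.mem_prod, F, Finset.mem_filter, Finset.mem_univ, true_and,
      Prod.forall, Fin.forall_fin_succ, pickD]
    simp
  have hc : E.card = (F 0).card + ((F 1).card + (F 2).card) := by
    have : E = Finset.univ.biUnion (fun i : Fin 3 => (F i).image (fun e => (i, e))) := by
      ext ⟨i, e⟩
      simp [F]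
    rw [this, Finset.card_biUnion]
    · simp only [Fin.sum_univ_three]
      rw [Finset.card_image_of_injective _ (Prod.mk_right_injective _),
        Finset.card_image_of_injective _ (Prod.mk_right_injective _),
        Finset.card_image_of_injective _ (Prod.mk_right_injective _)]
      ring
    · intro i _ j _ hij
      rw [Function.onFun, Finset.disjoint_left]
      intro x hx hy
      simp only [Finset.mem_image] at hx hy
      obtain ⟨a, _, rfl⟩ := hx
      obtain ⟨b, _, hb⟩ := hy
      exact hij (by simpa using (congrArg Prod.fst hb).symm)
  have : IsProbabilityMeasure (dnp n (q3 n ε θ)) := by unfold dnp; infer_instance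
  have : IsProbabilityMeasure (dnp n (q2 n ε θ)) := by unfold dnp; infer_instance
  rw [hs, tripleM, Measure.prod_prod, Measure.prod_prod, hc, pow_add, pow_add]
  gcongr
  · exact dnp_all_le n _ Q h1 _
  · exact dnp_all_le n _ Q h2 _
  · exact dnp_all_le n _ Q h3 _

/-- bad event -/
def badE (n m : ℕ) :
    Set ((Fin n × Fin n → Bool) × (Fin n × Fin n → Bool) × (Fin n × Fin n → Bool)) :=
  ⋃ A ∈ Finset.powersetCard m (Finset.univ : Finset (Fin n)),
    ⋃ E ∈ Finset.powersetCard (2 * m) ((Finset.univ : Finset (Fin 3)) ×ˢ (A ×ˢ A)),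
      {ω | ∀ x ∈ E, pickD ω x.1 x.2 = true}

lemma badE_le (n m : ℕ) (ε θ Q : ℝ) (h1 : q1 n ε θ ≤ Q) (h2 : q2 n ε θ ≤ Q)
    (h3 : q3 n ε θ ≤ Q) :
    tripleM n ε θ (badE n m) ≤
      (n.choose m) * (((3 * (m * m)).choose (2 * m)) * ENNReal.ofReal Q ^ (2 * m)) := by
  unfold badE
  refine (measure_biUnion_finset_le _ _).trans ?_
  refine (Finset.sum_le_card_nsmul _ _
    (((3 * (m * m)).choose (2 * m)) * ENNReal.ofReal Q ^ (2 * m)) ?_).trans ?_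
  · intro A hA
    have hA := (Finset.mem_powersetCard.1 hA).2
    refine (measure_biUnion_finset_le _ _).trans ?_
    refine (Finset.sum_le_card_nsmul _ _ (ENNReal.ofReal Q ^ (2 * m)) ?_).trans ?_
    · intro E hE
      have := triple_all_le n ε θ Q h1 h2 h3 E
      rwa [(Finset.mem_powersetCard.1 hE).2] at this
    · simp [Finset.card_powersetCard, hA]
  · simp [Finset.card_powersetCard]

open Classical in
lemma mem_badE (n m : ℕ) (A S0 : Finset (Fin n))
    (ω : (Fin n × Fin n → Bool) × (Fin n × Fin n → Bool) × (Fin n × Fin n → Bool))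
    (hA : A.card = m) (hS : 2 * S0.card ≤ m) (hg : ∀ v ∈ A, v ∉ S0 → CanGrow4 ω A v) :
    ω ∈ badE n m := by
  let F : Finset (Fin 3 × (Fin n × Fin n)) :=
    (Finset.univ ×ˢ (A ×ˢ A)).filter fun x => pickD ω x.1 x.2 = true
  have hF : 2 * m ≤ F.card := by
    have h4 : 4 * (A \ S0).card ≤ F.card := by
      have hmap : ∀ v ∈ A \ S0, 4 ≤ (F.filter fun x => x.2.1 = v).card := by
        intro v hv
        rw [Finset.mem_sdiff] at hv
        have aux : ∀ i : Fin 3, (A.filter fun w => w ≠ v ∧ pickD ω i (v, w) = true).card ≤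
            (F.filter fun x => x.2.1 = v).card := by
          intro i
          refine Finset.card_le_card_of_injOn (fun w => (i, (v, w))) ?_ ?_
          · intro w hw
            simp at hw
            simp [F, hw, hv]
          · intro a _ b _ hab
            simpa using hab
        rcases hg v hv.1 hv.2 with h | h | h
        · exact h.trans (aux 0)
        · exact h.trans (aux 1)
        · exact h.trans (aux 2)
      calc 4 * (A \ S0).card = ∑ v ∈ A \ S0, 4 := by simp [mul_comm]
        _ ≤ ∑ v ∈ A \ S0, (F.filter fun x => x.2.1 = v).card := Finset.sum_le_sum hmap
        _ ≤ F.card := by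
          rw [Finset.sum_card_fiberwise_eq_card_filter]
          exact Finset.card_filter_le _ _
    have := Finset.le_card_sdiff S0 A
    omega
  obtain ⟨E, hEF, hE⟩ := Finset.exists_subset_card_eq hF
  simp only [badE, Set.mem_iUnion, Finset.mem_powersetCard]
  refine ⟨A, ⟨Finset.subset_univ _, hA⟩, E, ⟨hEF.trans (Finset.filter_subset _ _), hE⟩, ?_⟩
  intro x hx
  exact (Finset.mem_filter.1 (hEF hx)).2

open Classical in
lemma exists_stage (n m : ℕ) 
    (ω : (Fin n × Fin n → Bool) × (Fin n × Fin n → Bool) × (Fin n × Fin n → Bool))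
    (S : ℕ → Finset (Fin n)) (T : ℕ)
    (hS : ∀ t < T, ∃ v ∉ S t, CanGrow4 ω (S t) v ∧ S (t + 1) = insert v (S t))
    (h0 : (S 0).card ≤ m) (hT : m ≤ (S T).card) :
    ∃ t, (S t).card = m ∧ ∀ v ∈ S t, v ∉ S 0 → CanGrow4 ω (S t) v := by
  have key : ∀ t ≤ T, ∀ v ∈ S t, v ∉ S 0 → CanGrow4 ω (S t) v := by
    intro t
    induction t with
    | zero => intro _ v hv hv'; exact absurd hv hv'
    | succ t ih =>
      intro ht v hv hv'
      obtain ⟨u, hu, hg, he⟩ := hS t (by omega)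
      have hsub : S t ⊆ S (t + 1) := by rw [he]; exact Finset.subset_insert _ _
      have hm : CanGrow4 ω (S t) v → CanGrow4 ω (S (t + 1)) v := by
        rintro (h | h | h)
        · exact Or.inl (h.trans (Finset.card_le_card (Finset.filter_subset_filter _ hsub)))
        · exact Or.inr (Or.inl (h.trans (Finset.card_le_card (Finset.filter_subset_filter _ hsub))))
        · exact Or.inr (Or.inr (h.trans (Finset.card_le_card (Finset.filter_subset_filter _ hsub))))
      apply hm
      rw [he, Finset.mem_insert] at hv
      rcases hv with rfl | hv
      · exact hg
      · exact ih (by omega) v hv hv'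
  have ex : ∃ t ≤ T, (S t).card = m := by
    clear key
    induction T with
    | zero => exact ⟨0, le_rfl, le_antisymm h0 hT⟩
    | succ T ih =>
      by_cases h : m ≤ (S T).card
      · obtain ⟨t, ht, h⟩ := ih (fun t ht => hS t (by omega)) h
        exact ⟨t, by omega, h⟩
      · obtain ⟨u, hu, hg, he⟩ := hS T (by omega)
        refine ⟨T + 1, le_rfl, ?_⟩
        rw [he, Finset.card_insert_of_notMem hu] at hT ⊢
        omega
  obtain ⟨t, ht, h⟩ := ex
  exact ⟨t, h, key t ht⟩

lemma choose_le_exp (n m : ℕ) (hm : 0 < m) :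
    (n.choose m : ℝ) ≤ (Real.exp 1 * n / m) ^ m := by
  have h1 : (n.choose m : ℝ) ≤ (n : ℝ) ^ m / m.factorial := Nat.choose_le_pow_div m n
  have h2 := Real.pow_div_factorial_le_exp (m : ℝ) (by positivity) m
  have hm' : (0 : ℝ) < m := by exact_mod_cast hm
  refine h1.trans ?_
  calc (n : ℝ) ^ m / m.factorial = ((n : ℝ) / m) ^ m * ((m : ℝ) ^ m / m.factorial) := by
        rw [div_pow]; field_simp
    _ ≤ ((n : ℝ) / m) ^ m * Real.exp m := by gcongr
    _ = _ := by
        rw [← Real.exp_one_pow m, ← mul_pow]; congr 1; ring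

lemma numeric_bound (n m : ℕ) (L : ℝ) (hn : 0 < n) (hm : 0 < m) (hL : 0 ≤ L) :
    (n.choose m : ℝ) * (((3 * (m * m)).choose (2 * m) : ℝ) * (L / n) ^ (2 * m)) ≤
      (46 * (m * L ^ 2 / n)) ^ m := by
  have hm' : (0 : ℝ) < m := by exact_mod_cast hm
  have hn' : (0 : ℝ) < n := by exact_mod_cast hn
  have a1 := choose_le_exp n m hm
  have a2 := choose_le_exp (3 * (m * m)) (2 * m) (by omega)
  calc _ ≤ (Real.exp 1 * n / m) ^ m * ((Real.exp 1 * (3 * (m * m) : ℕ) / (2 * m : ℕ)) ^ (2 * m) * (L / n) ^ (2 * m)) := by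
        gcongr
    _ = ((Real.exp 1 * n / m) * ((Real.exp 1 * (3 * (m * m) : ℕ) / (2 * m : ℕ)) ^ 2 * (L / n) ^ 2)) ^ m := by
        rw [mul_pow, mul_pow, ← pow_mul, ← pow_mul]
    _ = (Real.exp 1 ^ 3 * (9 / 4) * (m * L ^ 2 / n)) ^ m := by
        congr 1; push_cast; field_simp; ring
    _ ≤ _ := by
        gcongr
        have := Real.exp_one_lt_d9
        have h3 : Real.exp 1 ^ 3 ≤ 2.7182818286 ^ 3 := by gcongr
        norm_num at h3 ⊢
        linarith

lemma asym_facts : ∀ᶠ n : ℕ in atTop, 0 < n ∧ 0 < Real.log n ∧ 20 ≤ Real.log (Real.log n) ∧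
    3 ≤ (n : ℝ) ^ (3 / 4 : ℝ) ∧ 2 * Real.log n + 1 ≤ (n : ℝ) ^ (3 / 4 : ℝ) := by
  have hc : Tendsto (fun n : ℕ => (n : ℝ)) atTop atTop := tendsto_natCast_atTop_atTop
  have hl := Real.tendsto_log_atTop.comp hc
  have hll := Real.tendsto_log_atTop.comp hl
  have hp := (tendsto_rpow_atTop (show (0 : ℝ) < 3 / 4 by norm_num)).comp hc
  have hlo := ((isLittleO_log_rpow_atTop (show (0 : ℝ) < 3 / 4 by norm_num)).comp_tendsto hc).bound
    (show (0 : ℝ) < 1 / 4 by norm_num)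
  filter_upwards [eventually_gt_atTop 0, hl.eventually_gt_atTop 0, hll.eventually_ge_atTop 20,
    hp.eventually_ge_atTop 3, hlo] with n h1 h2 h3 h4 h5
  simp only [Function.comp] at h2 h3 h4 h5
  refine ⟨h1, h2, h3, h4, ?_⟩
  rw [Real.norm_of_nonneg h2.le, Real.norm_of_nonneg (by positivity)] at h5
  linarith

lemma params (n : ℕ) (e t y : ℝ) (hn : 0 < n) (hL : 0 < Real.log n) (hy : 20 ≤ y)
    (he : 100 / Real.sqrt y < e) (he1 : e ≤ 1) (ht : 100 / Real.sqrt y < t) (ht1 : t ≤ 1) :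
    q1 n e t ≤ Real.log n / n ∧ q2 n e t ≤ Real.log n / n ∧ q3 n e t ≤ Real.log n / n ∧
    gamParam e t ≤ 1 / 4 ∧ 1 / y ≤ gamParam e t := by
  have hs : 0 < Real.sqrt y := Real.sqrt_pos.2 (by linarith)
  have hss : Real.sqrt y ^ 2 = y := Real.sq_sqrt (by linarith)
  set r := 1 / Real.sqrt y with hr
  have hr0 : 0 < r := by positivity
  have hrr : r ^ 2 = 1 / y := by rw [hr, div_pow, hss]; simp
  have he' : 100 * r < e := by rw [hr]; rwa [mul_one_div]
  have ht' : 100 * r < t := by rw [hr]; rwa [mul_one_div]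
  have e1 : eps1 e ≤ 1 / 3 := by unfold eps1; linarith
  have e2 : 33 * r ≤ eps1 e := by unfold eps1; linarith
  have t1 : 8 * r ≤ th1 e t := by unfold th1; exact le_min (by linarith) (by linarith)
  have t2 : th1 e t ≤ 1 / 12 := (min_le_right _ _).trans (by linarith)
  have hn' : (0 : ℝ) < n := by exact_mod_cast hn
  have hx : 0 < Real.log n / n := by positivity
  have f1 : th1 e t / (1 + t) ≤ 1 := by rw [div_le_one (by linarith)]; linarith
  have f10 : 0 ≤ th1 e t / (1 + t) := div_nonneg (by linarith) (by linarith)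
  have f2 : (1 + th2 e t) / (1 + t) ≤ 1 := by
    rw [div_le_one (by linarith)]; unfold th2; linarith
  have Q1 : q1 n e t ≤ Real.log n / n := by
    unfold q1
    calc _ = Real.log n / n * (eps1 e / 2 * (th1 e t / (1 + t))) := by field_simp
      _ ≤ Real.log n / n * 1 := by gcongr; nlinarith
      _ = _ := mul_one _
  refine ⟨Q1, ?_, Q1, min_le_left _ _, ?_⟩
  · unfold q2
    calc _ = Real.log n / n * ((1 + eps1 e) / 2 * ((1 + th2 e t) / (1 + t))) := by field_simp
      _ ≤ Real.log n / n * 1 := by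
        gcongr
        have : (1 + eps1 e) / 2 * ((1 + th2 e t) / (1 + t)) ≤ (1 + eps1 e) / 2 * 1 :=
          mul_le_mul_of_nonneg_left f2 (by linarith)
        linarith
      _ = _ := mul_one _
  · have : 1 / y ≤ eps1 e * th1 e t / 4 := by
      rw [← hrr]
      have : (33 * r) * (8 * r) ≤ eps1 e * th1 e t := by
        gcongr
        linarith
      nlinarith
    refine le_min ?_ (le_min this this)
    rw [div_le_div_iff₀ (by linarith) (by norm_num)]; linarith

lemma base_bound (n : ℕ) (g : ℝ) (hn : 0 < n) (hL : 0 < Real.log n)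
    (hy : 20 ≤ Real.log (Real.log n)) (hg : 1 / Real.log (Real.log n) ≤ g) :
    46 * ((n : ℝ) ^ (1 - g) * Real.log n ^ 2 / n) ≤ Real.exp (-1) := by
  have hn' : (0 : ℝ) < n := by exact_mod_cast hn
  set L := Real.log n with hLd
  set y := Real.log L with hyd
  have hLy : L = Real.exp y := (Real.exp_log hL).symm
  have h46 : (46 : ℝ) ≤ Real.exp 4 := by
    have := Real.exp_one_gt_d9
    have h4 : (2.7 : ℝ) ^ 4 ≤ Real.exp 1 ^ 4 := by gcongr; linarith
    rw [Real.exp_one_pow] at h4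
    norm_num at h4 ⊢
    linarith
  have hexp : 2 * y ^ 2 + 5 * y ≤ L := by
    have := Real.pow_div_factorial_le_exp y (by linarith) 3
    rw [← hLy] at this
    norm_num [Nat.factorial] at this
    nlinarith [mul_nonneg (sub_nonneg.2 hy) (sq_nonneg y)]
  have hgL : 2 * y + 5 ≤ g * L := by
    have : 1 / y * L ≤ g * L := by gcongr
    refine le_trans ?_ this
    rw [one_div_mul_eq_div, le_div_iff₀ (by linarith)]
    linarith
  have hp : (n : ℝ) ^ (1 - g) / n = Real.exp (-(g * L)) := by
    rw [Real.rpow_sub hn', Real.rpow_one, Real.rpow_def_of_pos hn', Real.exp_neg, ← hLd]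
    field_simp
  calc _ = 46 * (L ^ 2 * ((n : ℝ) ^ (1 - g) / n)) := by ring
    _ ≤ Real.exp 4 * (Real.exp y ^ 2 * Real.exp (-(g * L))) := by rw [hp, ← hLy]; gcongr
    _ = Real.exp (4 + (2 * y + -(g * L))) := by
        rw [Real.exp_add, Real.exp_add]; congr 2; rw [← Real.exp_nat_mul]; norm_num
    _ ≤ _ := by rw [Real.exp_le_exp]; linarith

/-- With probability `1 - o(n⁻¹)`: either `|S₀| > (1/3)·n^{1-γ}`, or every
set obtained from `S₀` by repeatedly adding a vertex outside the current set having at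
least `4` out-neighbors in the current set in one of `D₁, D₂, D₃`, continued until no such
vertex exists (in any order), has at most `n^{1-γ}` elements.  Here
`γ = min(1/4, ε₁θ₁/4, ε₃θ₃/4)`. -/
theorem absorbed_set_small_whp (ε θ : ℕ → ℝ)
    (hε : ∀ᶠ n : ℕ in atTop,
      100 / Real.sqrt (Real.log (Real.log n)) < ε n ∧ ε n ≤ 1)
    (hθ : ∀ᶠ n : ℕ in atTop,
      100 / Real.sqrt (Real.log (Real.log n)) < θ n ∧ θ n ≤ 1) :
    Tendsto
      (fun n : ℕ =>
        (n : ℝ) *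
          (tripleM n (ε n) (θ n)
            {ω | ¬ (1 / 3 * (n : ℝ) ^ (1 - gamParam (ε n) (θ n)) <
                      ((lowDegSet n (ε n) (θ n) ω).card : ℝ) ∨
                    ∀ (S : ℕ → Finset (Fin n)) (T : ℕ),
                      S 0 = lowDegSet n (ε n) (θ n) ω →
                      (∀ t < T, ∃ v ∉ S t,
                        CanGrow4 ω (S t) v ∧ S (t + 1) = insert v (S t)) →
                      (¬ ∃ v ∉ S T, CanGrow4 ω (S T) v) →
                      ((S T).card : ℝ) ≤ (n : ℝ) ^ (1 - gamParam (ε n) (θ n)))}).toReal)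
      atTop (nhds 0) := by
  refine squeeze_zero' (g := fun n : ℕ => 1 / (n : ℝ)) ?_ ?_ tendsto_one_div_atTop_nhds_zero_nat
  · exact Eventually.of_forall fun n => by positivity
  filter_upwards [hε, hθ, asym_facts] with n ⟨he, he1⟩ ⟨ht, ht1⟩ ⟨hn, hL, hy, h3, h2L⟩
  obtain ⟨Q1, Q2, Q3, hg4, hgy⟩ := params n (ε n) (θ n) _ hn hL hy he he1 ht ht1
  set g := gamParam (ε n) (θ n) with hgd
  set N := (n : ℝ) ^ (1 - g) with hN
  have hn' : (0 : ℝ) < n := by exact_mod_cast hn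
  have hNge : (n : ℝ) ^ (3 / 4 : ℝ) ≤ N :=
    Real.rpow_le_rpow_of_exponent_le (by exact_mod_cast hn) (by linarith)
  have hN0 : 0 ≤ N := by positivity
  set m := ⌊N⌋₊ with hmd
  have hmN : (m : ℝ) ≤ N := Nat.floor_le hN0
  have hNm : N < m + 1 := Nat.lt_floor_add_one N
  have hm0 : 0 < m := by
    have : (0 : ℝ) < m := by linarith
    exact_mod_cast this
  have hsub := measure_mono (μ := tripleM n (ε n) (θ n)) (s := {ω | ¬ (1 / 3 * N <
                      ((lowDegSet n (ε n) (θ n) ω).card : ℝ) ∨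
                    ∀ (S : ℕ → Finset (Fin n)) (T : ℕ),
                      S 0 = lowDegSet n (ε n) (θ n) ω →
                      (∀ t < T, ∃ v ∉ S t,
                        CanGrow4 ω (S t) v ∧ S (t + 1) = insert v (S t)) →
                      (¬ ∃ v ∉ S T, CanGrow4 ω (S T) v) →
                      ((S T).card : ℝ) ≤ N)}) (t := badE n m) (by
    intro ω hω
    simp only [Set.mem_setOf_eq, not_or, not_lt] at hω
    obtain ⟨hS0, hω⟩ := hω
    push Not at hω
    obtain ⟨S, T, h0, hS, -, hT⟩ := hω
    rw [← h0] at hS0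
    have hS0' : 2 * (S 0).card ≤ m := by
      have : (2 : ℝ) * (S 0).card ≤ m := by linarith
      exact_mod_cast this
    have hT' : m ≤ (S T).card := by
      have : (m : ℝ) ≤ (S T).card := by linarith
      exact_mod_cast this
    obtain ⟨t, hc, hg⟩ := exists_stage n m ω S T hS (by omega) hT'
    exact mem_badE n m (S t) (S 0) ω hc hS0' hg)
  have hb := hsub.trans (badE_le n m _ _ _ Q1 Q2 Q3)
  have hQ0 : 0 ≤ Real.log n / n := by positivity
  have hb2 := ENNReal.toReal_mono (by finiteness) hb
  simp only [ENNReal.toReal_mul, ENNReal.toReal_pow, ENNReal.toReal_natCast,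
    ENNReal.toReal_ofReal hQ0] at hb2
  have hb3 := hb2.trans (numeric_bound n m (Real.log n) hn hm0 hL.le)
  have hb4 : (46 * ((m : ℝ) * Real.log n ^ 2 / n)) ^ m ≤ (1 / (n : ℝ)) ^ 2 := by
    calc _ ≤ (46 * (N * Real.log n ^ 2 / n)) ^ m := by gcongr
      _ ≤ Real.exp (-1) ^ m := by
        gcongr
        exact base_bound n g hn hL hy hgy
      _ = Real.exp (-m) := by rw [← Real.exp_nat_mul]; congr 1; ring
      _ ≤ Real.exp (-(2 * Real.log n)) := by rw [Real.exp_le_exp]; linarith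
      _ = _ := by
        rw [Real.exp_neg, two_mul, Real.exp_add, Real.exp_log hn', one_div, inv_pow, sq]
  calc _ ≤ (n : ℝ) * (1 / (n : ℝ)) ^ 2 := mul_le_mul_of_nonneg_left (hb3.trans hb4) hn'.le
    _ = 1 / n := by field_simp
end

section
/- Let q = q(n) satisfy q ≥ 0.98·log(n)/n. Then with high probability, fewer than n^{0.48} vertices of the Erdős–Rényi random graph G_{n,q} have degree at most (1/10)·log n. -/
open MeasureTheory Filter

/-- The Erdős–Rényi random graph `G_{n,p}`: each unordered pair of vertices of `Fin n`
is independently present with probability `p`. -/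
noncomputable def gnp (n : ℕ) (p : ℝ) : Measure (Sym2 (Fin n) → Bool) :=
  Measure.pi fun _ => bernoulliM p

/-- The degree of the vertex `v` in the graph described by `ω`. -/
def degB {n : ℕ} (ω : Sym2 (Fin n) → Bool) (v : Fin n) : ℕ :=
  (Finset.univ.filter fun u => u ≠ v ∧ ω s(u, v) = true).card

lemma bern_int (p : ℝ) (h0 : 0 ≤ p) (h1 : p ≤ 1) (f : Bool → ℝ) :
    ∫ b, f b ∂(bernoulliM p) = p * f true + (1 - p) * f false := by
  unfold bernoulliM
  rw [PMF.integral_eq_sum]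
  simp [PMF.bernoulli_apply, h0, h1]

lemma deg_mgf (n : ℕ) (p : ℝ) (h0 : 0 ≤ p) (h1 : p ≤ 1) (v : Fin n) :
    ∫ ω, (1/8 : ℝ) ^ (degB ω v) ∂(gnp n p) = (1 - p * (7/8)) ^ (n - 1) := by
  classical
  set S : Finset (Sym2 (Fin n)) := (Finset.univ.erase v).image (fun u => s(u, v)) with hS
  have hinj : Function.Injective (fun u : Fin n => s(u, v)) := fun a b h => by
    have h' := Sym2.congr_left.1 h
    exact h'
  have hcard : S.card = n - 1 := by
    rw [hS, Finset.card_image_of_injective _ hinj]; simp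
  let f : Sym2 (Fin n) → Bool → ℝ := fun e b => if e ∈ S then (if b = true then 1/8 else 1) else 1
  have key : ∀ ω : Sym2 (Fin n) → Bool, (1/8 : ℝ) ^ (degB ω v) = ∏ e, f e (ω e) := by
    intro ω
    simp only [f]
    rw [Finset.prod_ite_mem, Finset.univ_inter, hS, Finset.prod_image (fun a _ b _ h => hinj h)]
    rw [Finset.prod_ite]
    rw [Finset.prod_const, Finset.prod_const, one_pow, mul_one]
    have hd : degB ω v = (Finset.filter (fun u => ω s(u, v) = true) (Finset.univ.erase v)).card := by
      unfold degB
      apply congrArg Finset.card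
      ext u
      simp
    rw [hd]
  simp_rw [key]
  unfold gnp
  rw [integral_fintype_prod_eq_prod (μ := fun _ => bernoulliM p)]
  have : ∀ e, ∫ b, f e b ∂(bernoulliM p) = if e ∈ S then 1 - p * (7/8) else 1 := by
    intro e
    rw [bern_int p h0 h1]
    by_cases h : e ∈ S <;> simp [f, h] <;> ring
  simp_rw [this]
  rw [Finset.prod_ite_mem, Finset.univ_inter, Finset.prod_const, hcard]

open scoped Classical in
lemma bad_bound (n : ℕ) (p a T : ℝ) (h0 : 0 ≤ p) (h1 : p ≤ 1) (hT : 0 < T) :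
    (gnp n p).real {ω | T ≤ ((Finset.univ.filter fun v : Fin n => (degB ω v : ℝ) ≤ a).card : ℝ)}
      ≤ n * ((8:ℝ) ^ a * (1 - p * (7/8)) ^ (n - 1)) / T := by
  haveI : IsProbabilityMeasure (gnp n p) := by unfold gnp; infer_instance
  have hint : ∀ g : (Sym2 (Fin n) → Bool) → ℝ, Integrable g (gnp n p) := fun g => Integrable.of_finite
  let X : (Sym2 (Fin n) → Bool) → ℝ := fun ω => ∑ v, (8:ℝ) ^ a * (1/8 : ℝ) ^ (degB ω v)
  have hX : ∫ ω, X ω ∂(gnp n p) = n * ((8:ℝ) ^ a * (1 - p * (7/8)) ^ (n - 1)) := by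
    simp only [X]
    rw [integral_finsetSum _ (fun v _ => hint _)]
    simp_rw [integral_const_mul, deg_mgf n p h0 h1]
    simp
  have hm := mul_meas_ge_le_integral_of_nonneg (μ := gnp n p) (f := X)
    (ae_of_all _ fun ω => Finset.sum_nonneg fun v _ => by positivity) (hint X) T
  rw [hX] at hm
  rw [le_div_iff₀ hT, mul_comm]
  refine le_trans (mul_le_mul_of_nonneg_left (measureReal_mono ?_) hT.le) hm
  intro ω hω
  refine le_trans (Set.mem_setOf.1 hω) ?_
  rw [Finset.card_eq_sum_ones]
  push_cast
  refine le_trans (Finset.sum_le_sum (g := fun v => (8:ℝ) ^ a * (1/8 : ℝ) ^ (degB ω v)) ?_)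
    (Finset.sum_le_sum_of_subset_of_nonneg (Finset.subset_univ _) fun v _ _ => by positivity)
  intro v hv
  have hv := (Finset.mem_filter.1 hv).2
  rw [one_div, inv_pow, ← Real.rpow_natCast, ← Real.rpow_neg (by norm_num), ← Real.rpow_add (by norm_num)]
  exact Real.one_le_rpow (by norm_num) (by linarith)

lemma num_bound (n : ℕ) (hn : 100 ≤ n) (p : ℝ) (hp : 0.98 * Real.log n / n ≤ p) (h1 : p ≤ 1) :
    n * ((8:ℝ) ^ (1/10 * Real.log n) * (1 - p * (7/8)) ^ (n - 1)) / (n:ℝ) ^ (0.48:ℝ)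
      ≤ (n:ℝ) ^ (-(0.08:ℝ)) := by
  have hn' : (100:ℝ) ≤ n := by exact_mod_cast hn
  have hpos : (0:ℝ) < n := by linarith
  have hL : 0 ≤ Real.log n := Real.log_nonneg (by linarith)
  have e1 : (8:ℝ) ^ (1/10 * Real.log n) ≤ Real.exp (0.208 * Real.log n) := by
    rw [Real.rpow_def_of_pos (by norm_num)]
    apply Real.exp_le_exp.2
    have : Real.log 8 = 3 * Real.log 2 := by
      rw [show (8:ℝ) = 2 ^ 3 by norm_num, Real.log_pow]; norm_num
    rw [this]
    nlinarith [Real.log_two_lt_d9]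
  have e2 : (1 - p * (7/8)) ^ (n - 1) ≤ Real.exp (-(0.848 * Real.log n)) := by
    calc (1 - p * (7/8)) ^ (n - 1) ≤ (Real.exp (-(p * (7/8)))) ^ (n - 1) := by
          apply pow_le_pow_left₀ (by linarith)
          exact Real.one_sub_le_exp_neg _
      _ = Real.exp (-(p * (n - 1) * (7/8))) := by
          rw [← Real.exp_nat_mul, Nat.cast_sub (by omega)]; congr 1; push_cast; ring
      _ ≤ _ := by
          apply Real.exp_le_exp.2
          rw [div_le_iff₀ hpos] at hp
          have hp0 : 0 ≤ p := by
            by_contra h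
            nlinarith
          nlinarith
  rw [div_le_iff₀ (by positivity), ← Real.rpow_add hpos]
  have e3 : (n:ℝ) ^ (-(0.08:ℝ) + 0.48) = Real.exp (0.4 * Real.log n) := by
    rw [Real.rpow_def_of_pos hpos]; congr 1; ring
  rw [e3]
  calc _ ≤ n * (Real.exp (0.208 * Real.log n) * Real.exp (-(0.848 * Real.log n))) := by
        gcongr
        apply pow_nonneg; linarith
    _ = Real.exp (Real.log n + (0.208 * Real.log n + -(0.848 * Real.log n))) := by
        rw [Real.exp_add, Real.exp_add, Real.exp_log hpos]
    _ ≤ _ := Real.exp_le_exp.2 (by linarith)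

open scoped Classical in
/-- If `q = q(n) ≥ 0.98·log n / n`, then whp fewer than `n^{0.48}`
vertices of `G_{n,q}` have degree at most `(1/10)·log n`. -/
theorem few_low_degree_vertices_whp (q : ℕ → ℝ)
    (hq : ∀ᶠ n : ℕ in atTop, 0.98 * Real.log n / n ≤ q n ∧ q n ≤ 1) :
    Tendsto
      (fun n : ℕ =>
        gnp n (q n)
          {ω | ((Finset.univ.filter fun v : Fin n =>
                (degB ω v : ℝ) ≤ 1 / 10 * Real.log n).card : ℝ) <
              (n : ℝ) ^ (0.48 : ℝ)})
      atTop (nhds 1) := by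
  have hlim : Tendsto (fun n : ℕ => ENNReal.ofReal (1 - (n:ℝ) ^ (-(0.08:ℝ)))) atTop (nhds 1) := by
    have h1 : Tendsto (fun n : ℕ => (n:ℝ) ^ (-(0.08:ℝ))) atTop (nhds 0) :=
      (tendsto_rpow_neg_atTop (by norm_num)).comp tendsto_natCast_atTop_atTop
    have := ENNReal.tendsto_ofReal (h1.const_sub 1)
    simpa using this
  refine tendsto_of_tendsto_of_tendsto_of_le_of_le' hlim tendsto_const_nhds ?_ ?_
  · filter_upwards [hq, eventually_ge_atTop 100] with n hn hn100
    have hn' : (100:ℝ) ≤ n := by exact_mod_cast hn100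
    have hpos : (0:ℝ) < n := by linarith
    have hL : 0 ≤ Real.log n := Real.log_nonneg (by linarith)
    have h0 : 0 ≤ q n := le_trans (by positivity) hn.1
    haveI : IsProbabilityMeasure (gnp n (q n)) := by unfold gnp; infer_instance
    have hb := (bad_bound n (q n) (1 / 10 * Real.log n) ((n:ℝ) ^ (0.48:ℝ)) h0 hn.2
      (by positivity)).trans (num_bound n hn100 (q n) hn.1 hn.2)
    rw [ENNReal.ofReal_le_iff_le_toReal (measure_ne_top _ _)]
    change _ ≤ (gnp n (q n)).real _
    have hc := probReal_compl_eq_one_sub (μ := gnp n (q n))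
      (s := {ω | (n:ℝ) ^ (0.48:ℝ) ≤ ((Finset.univ.filter fun v : Fin n =>
        (degB ω v : ℝ) ≤ 1 / 10 * Real.log n).card : ℝ)}) (Set.toFinite _).measurableSet
    rw [Set.compl_setOf] at hc
    simp only [not_le] at hc
    rw [hc]
    linarith
  · filter_upwards with n
    haveI : IsProbabilityMeasure (gnp n (q n)) := by unfold gnp; infer_instance
    exact prob_le_one
end

section
/- Let γ = γ(n) satisfy 1/(log log n) ≤ γ ≤ 1 and let 0 ≤ q ≤ 1.01·log(n)/n. Then the probability that a binomial random variable Bin(⌊n^{1−γ}⌋, q) is at least 2/γ is o(n^{−1}); more precisely, for all sufficiently large n it is at most (2γ·log n / n^{γ})^{2/γ}. -/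
open Filter

/-- The probability that `Bin(m,q)` is at least `a`, written out as the explicit binomial
upper tail `∑_{a ≤ k} C(m,k) q^k (1-q)^{m-k}`. -/
noncomputable def binomUpperTail (m : ℕ) (q a : ℝ) : ℝ :=
  ∑ k ∈ Finset.range (m + 1),
    if a ≤ (k : ℝ) then (m.choose k : ℝ) * q ^ k * (1 - q) ^ (m - k) else 0

lemma tail_nonneg (m : ℕ) (q a : ℝ) (h0 : 0 ≤ q) (h1 : q ≤ 1) : 0 ≤ binomUpperTail m q a := by
  unfold binomUpperTail
  refine Finset.sum_nonneg fun k _ => ?_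
  have : 0 ≤ 1 - q := by linarith
  split_ifs
  · positivity
  · exact le_rfl

lemma tail_chernoff (m : ℕ) (q a M : ℝ) (h0 : 0 ≤ q) (h1 : q ≤ 1) (hM : 0 < M)
    (hm : m * q ≤ M) (ha : M ≤ a) :
    binomUpperTail m q a ≤ (Real.exp 1 * M / a) ^ a := by
  have ha0 : 0 < a := by linarith
  set t : ℝ := a / M with ht
  have ht1 : 1 ≤ t := by rw [ht, le_div_iff₀ hM]; linarith
  have ht0 : 0 < t := by linarith
  have hq1 : 0 ≤ 1 - q := by linarith
  have hta : 0 < t ^ a := Real.rpow_pos_of_pos ht0 a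
  have key : t ^ a * binomUpperTail m q a ≤ (q * t + (1 - q)) ^ m := by
    unfold binomUpperTail
    rw [add_pow, Finset.mul_sum]
    refine Finset.sum_le_sum fun k _ => ?_
    split_ifs with hk
    · have h2 : t ^ a ≤ t ^ k := by
        rw [← Real.rpow_natCast t k]
        exact Real.rpow_le_rpow_of_exponent_le ht1 hk
      calc _ ≤ t ^ k * ((m.choose k : ℝ) * q ^ k * (1 - q) ^ (m - k)) := by gcongr
        _ = _ := by rw [mul_pow]; ring
    · rw [mul_zero]; positivity
  have h3 : (q * t + (1 - q)) ^ m ≤ Real.exp a := by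
    have h4 : q * t + (1 - q) ≤ Real.exp (q * t) := by
      have := Real.add_one_le_exp (q * t)
      linarith
    calc _ ≤ (Real.exp (q * t)) ^ m := by gcongr; 
      _ = Real.exp (m * q * t) := by rw [← Real.exp_nat_mul]; ring_nf
      _ ≤ Real.exp a := by
        apply Real.exp_le_exp.2
        calc m * q * t ≤ M * t := by gcongr
          _ = a := by rw [ht]; field_simp
  have h5 : (Real.exp 1 * M / a) ^ a = Real.exp a / t ^ a := by
    have : Real.exp 1 * M / a = Real.exp 1 / t := by rw [ht]; field_simp
    rw [this, Real.div_rpow (Real.exp_pos 1).le ht0.le, Real.exp_one_rpow]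
  rw [h5, le_div_iff₀ hta]
  linarith

lemma main_bounds (n : ℕ) (q g x : ℝ) (hx : x = Real.log (Real.log n)) (hn : 2 ≤ n)
    (hx1 : 1 ≤ x) (hxx : 8 * x ^ 2 ≤ Real.exp x) (hln : 1.01 * Real.log n ≤ n)
    (hq0 : 0 ≤ q) (hq : q ≤ 1.01 * Real.log n / n) (hg : 1 / x ≤ g) (hg1 : g ≤ 1) :
    (0 ≤ binomUpperTail ⌊(n : ℝ) ^ (1 - g)⌋₊ q (2 / g)) ∧
    (binomUpperTail ⌊(n : ℝ) ^ (1 - g)⌋₊ q (2 / g) ≤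
        (2 * g * Real.log n / (n : ℝ) ^ g) ^ (2 / g)) ∧
    ((n : ℝ) * (2 * g * Real.log n / (n : ℝ) ^ g) ^ (2 / g) ≤ Real.exp (- (Real.log n / 2))) := by
  have hn0 : (0 : ℝ) < n := by positivity
  have hL0 : 0 < Real.log n := Real.log_pos (by exact_mod_cast hn)
  have hLx : Real.log n = Real.exp x := by rw [hx, Real.exp_log hL0]
  have hnx : (n : ℝ) = Real.exp (Real.log n) := (Real.exp_log hn0).symm
  have hx0 : 0 < x := by linarith
  have hg0 : 0 < g := lt_of_lt_of_le (by positivity) hg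
  have hgx : 1 / g ≤ x := by
    rw [div_le_iff₀ hg0]; rw [div_le_iff₀ hx0] at hg; linarith
  have hq1 : q ≤ 1 := hq.trans (by rw [div_le_one hn0]; exact hln)
  have hng : (n : ℝ) ^ g = Real.exp (Real.log n * g) := Real.rpow_def_of_pos hn0 g
  have hnLg : Real.log n ≤ (n : ℝ) ^ g := by
    rw [hng, hLx]
    apply Real.exp_le_exp.2
    have h1 : 1 ≤ g * x := by rwa [div_le_iff₀ hx0] at hg
    have h2 : x ^ 2 * g ≤ Real.exp x * g := by
      apply mul_le_mul_of_nonneg_right _ hg0.le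
      nlinarith
    nlinarith
  have hng0 : 0 < (n : ℝ) ^ g := by positivity
  refine ⟨tail_nonneg _ _ _ hq0 hq1, ?_, ?_⟩
  · have h := tail_chernoff ⌊(n : ℝ) ^ (1 - g)⌋₊ q (2 / g) (1.01 * Real.log n / (n : ℝ) ^ g)
      hq0 hq1 (by positivity) ?_ ?_
    · refine h.trans ?_
      apply Real.rpow_le_rpow (by positivity) _ (by positivity)
      have he := Real.exp_one_lt_d9
      have : Real.exp 1 * (1.01 * Real.log n / (n : ℝ) ^ g) / (2 / g)
          = (Real.exp 1 * 1.01 / 2) * (g * Real.log n / (n : ℝ) ^ g) := by field_simp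
      rw [this]
      have : 2 * g * Real.log n / (n : ℝ) ^ g = 2 * (g * Real.log n / (n : ℝ) ^ g) := by ring
      rw [this]
      apply mul_le_mul_of_nonneg_right _ (by positivity)
      linarith
    · calc (⌊(n : ℝ) ^ (1 - g)⌋₊ : ℝ) * q ≤ (n : ℝ) ^ (1 - g) * (1.01 * Real.log n / n) := by
            apply mul_le_mul (Nat.floor_le (by positivity)) hq hq0 (by positivity)
        _ = _ := by
            rw [Real.rpow_sub hn0, Real.rpow_one]; field_simp
    · have h1 : 1.01 * Real.log n / (n : ℝ) ^ g ≤ 2 := by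
        rw [div_le_iff₀ hng0]; linarith
      refine h1.trans ?_
      rw [le_div_iff₀ hg0]; linarith
  · have hp : 0 < 2 * g * Real.log n := by positivity
    rw [Real.rpow_def_of_pos (by positivity), Real.log_div hp.ne' hng0.ne', Real.log_rpow hn0]
    nth_rewrite 1 [hnx]
    rw [← Real.exp_add]
    apply Real.exp_le_exp.2
    have h1 : Real.log (2 * g * Real.log n) ≤ 1 + x := by
      calc _ ≤ Real.log (2 * Real.log n) := by
            apply Real.log_le_log hp
            nlinarith
        _ = Real.log 2 + x := by rw [Real.log_mul (by norm_num) hL0.ne', hx]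
        _ ≤ _ := by linarith [Real.log_two_lt_d9]
    have h2 : (Real.log (2 * g * Real.log n) - g * Real.log n) * (2 / g)
        = Real.log (2 * g * Real.log n) * (2 / g) - 2 * Real.log n := by field_simp
    rw [h2]
    have h3 : 2 / g ≤ 2 * x := by
      have : 2 / g = 2 * (1 / g) := by ring
      linarith
    have h4 : Real.log (2 * g * Real.log n) * (2 / g) ≤ (1 + x) * (2 * x) :=
      (mul_le_mul_of_nonneg_right h1 (by positivity)).trans
        (mul_le_mul_of_nonneg_left h3 (by positivity))
    nlinarith

/-- Let `1/(log log n) ≤ γ = γ(n) ≤ 1` and `0 ≤ q ≤ 1.01·log n / n`.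
Then `P(Bin(⌊n^{1-γ}⌋, q) ≥ 2/γ)` is `o(n⁻¹)`; more precisely, for all sufficiently
large `n` it is at most `(2γ·log n / n^γ)^{2/γ}`. -/
theorem binomial_neighbors_in_S_tail (q γ : ℕ → ℝ)
    (hq : ∀ᶠ n : ℕ in atTop, 0 ≤ q n ∧ q n ≤ 1.01 * Real.log n / n)
    (hγ : ∀ᶠ n : ℕ in atTop, 1 / Real.log (Real.log n) ≤ γ n ∧ γ n ≤ 1) :
    Tendsto
      (fun n : ℕ =>
        (n : ℝ) * binomUpperTail ⌊(n : ℝ) ^ (1 - γ n)⌋₊ (q n) (2 / γ n))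
      atTop (nhds 0) ∧
    ∀ᶠ n : ℕ in atTop,
      binomUpperTail ⌊(n : ℝ) ^ (1 - γ n)⌋₊ (q n) (2 / γ n) ≤
        (2 * γ n * Real.log n / (n : ℝ) ^ (γ n)) ^ (2 / γ n) := by
  have hL : Tendsto (fun n : ℕ => Real.log (n : ℝ)) atTop atTop :=
    Real.tendsto_log_atTop.comp tendsto_natCast_atTop_atTop
  have hLL : Tendsto (fun n : ℕ => Real.log (Real.log (n : ℝ))) atTop atTop :=
    Real.tendsto_log_atTop.comp hL
  have e1 : ∀ᶠ x : ℝ in atTop, 8 * x ^ 2 ≤ Real.exp x := by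
    have h := (Real.isLittleO_pow_exp_atTop (n := 2)).bound (show (0 : ℝ) < 1 / 8 by norm_num)
    filter_upwards [h] with x hx
    rw [Real.norm_eq_abs, Real.norm_eq_abs, abs_of_nonneg (sq_nonneg x), abs_of_pos (Real.exp_pos x)] at hx
    linarith
  have e2 : ∀ᶠ x : ℝ in atTop, 1.01 * Real.log x ≤ x := by
    have h := Real.isLittleO_log_id_atTop.bound (show (0 : ℝ) < 1 / 2 by norm_num)
    filter_upwards [h, eventually_ge_atTop 1] with x hx hx1
    rw [Real.norm_eq_abs, Real.norm_eq_abs, id, abs_of_nonneg (Real.log_nonneg hx1),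
      abs_of_nonneg (by linarith)] at hx
    linarith
  have main : ∀ᶠ n : ℕ in atTop,
      (0 ≤ binomUpperTail ⌊(n : ℝ) ^ (1 - γ n)⌋₊ (q n) (2 / γ n)) ∧
      (binomUpperTail ⌊(n : ℝ) ^ (1 - γ n)⌋₊ (q n) (2 / γ n) ≤
        (2 * γ n * Real.log n / (n : ℝ) ^ γ n) ^ (2 / γ n)) ∧
      ((n : ℝ) * (2 * γ n * Real.log n / (n : ℝ) ^ γ n) ^ (2 / γ n) ≤
        Real.exp (- (Real.log n / 2))) := by
    filter_upwards [hq, hγ, hLL.eventually e1, tendsto_natCast_atTop_atTop.eventually e2,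
      hLL.eventually (eventually_ge_atTop 1), eventually_ge_atTop 2] with n h1 h2 h3 h4 h5 h6
    exact main_bounds n (q n) (γ n) _ rfl h6 h5 h3 h4 h1.1 h1.2 h2.1 h2.2
  constructor
  · have hlim : Tendsto (fun n : ℕ => Real.exp (- (Real.log (n : ℝ) / 2))) atTop (nhds 0) :=
      Real.tendsto_exp_neg_atTop_nhds_zero.comp (hL.atTop_div_const (by norm_num))
    refine tendsto_of_tendsto_of_tendsto_of_le_of_le' tendsto_const_nhds hlim ?_ ?_
    · filter_upwards [main] with n h
      exact mul_nonneg (Nat.cast_nonneg n) h.1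
    · filter_upwards [main] with n h
      exact (mul_le_mul_of_nonneg_left h.2.1 (Nat.cast_nonneg n)).trans h.2.2
  · filter_upwards [main] with n h
    exact h.2.1
end

section
/- Let β = β(n) satisfy 0 < β ≤ 1 and β·log n → ∞ as n → ∞. Then for all sufficiently large n, the probability that a binomial random variable Bin(⌊0.99·n⌋, 0.49·β·log(n)/n) is at most (β/20)·log n is strictly less than n^{−0.258·β}. -/
open Filter

/-- The probability that `Bin(m,q)` is at most `a`, written out as the explicit binomial
lower tail `∑_{k ≤ a} C(m,k) q^k (1-q)^{m-k}`. -/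
noncomputable def binomLowerTail (m : ℕ) (q a : ℝ) : ℝ :=
  ∑ k ∈ Finset.range (m + 1),
    if (k : ℝ) ≤ a then (m.choose k : ℝ) * q ^ k * (1 - q) ^ (m - k) else 0

theorem binomLowerTail_le_aux (m : ℕ) (q a : ℝ) (hq0 : 0 ≤ q) (hq1 : q ≤ 1) :
    binomLowerTail m q a ≤ Real.exp (2 * a - m * (q * (1 - Real.exp (-2)))) := by
  have h1 : binomLowerTail m q a ≤
      Real.exp (2 * a) * (q * Real.exp (-2) + (1 - q)) ^ m := by
    unfold binomLowerTail
    rw [add_pow, Finset.mul_sum]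
    refine Finset.sum_le_sum fun k _ => ?_
    have hq' : 0 ≤ 1 - q := by linarith
    have hT : 0 ≤ (m.choose k : ℝ) * q ^ k * (1 - q) ^ (m - k) := by positivity
    have e : Real.exp (2 * a) * ((q * Real.exp (-2)) ^ k * (1 - q) ^ (m - k) * (m.choose k : ℝ))
        = ((m.choose k : ℝ) * q ^ k * (1 - q) ^ (m - k)) * Real.exp (2 * a - 2 * k) := by
      have : Real.exp (2 * a - 2 * k) = Real.exp (2 * a) * Real.exp (-2) ^ k := by
        rw [← Real.exp_nat_mul, ← Real.exp_add]
        congr 1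
        ring
      rw [this, mul_pow]
      ring
    rw [e]
    split_ifs with h
    · have : 1 ≤ Real.exp (2 * a - 2 * k) := Real.one_le_exp (by linarith)
      exact le_mul_of_one_le_right hT this
    · positivity
  refine h1.trans ?_
  have h2 : q * Real.exp (-2) + (1 - q) ≤ Real.exp (-(q * (1 - Real.exp (-2)))) := by
    have := Real.add_one_le_exp (-(q * (1 - Real.exp (-2))))
    linarith
  have h0 : 0 ≤ q * Real.exp (-2) + (1 - q) := by
    have : 0 ≤ q * Real.exp (-2) := by positivity
    linarith
  have h3 := pow_le_pow_left₀ h0 h2 m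
  rw [← Real.exp_nat_mul] at h3
  calc _ ≤ Real.exp (2 * a) * Real.exp (m * -(q * (1 - Real.exp (-2)))) := by gcongr
    _ = _ := by
      rw [← Real.exp_add]
      congr 1
      ring

/-- Let `0 < β = β(n) ≤ 1` with `β·log n → ∞`.  For all sufficiently
large `n`, the probability that `Bin(⌊0.99n⌋, 0.49·β·log n / n)` is at most
`(β/20)·log n` is strictly less than `n^{-0.258·β}`. -/
theorem binomial_outdegree_lower_tail (β : ℕ → ℝ)
    (hβ : ∀ n : ℕ, 0 < β n ∧ β n ≤ 1)
    (hβlog : Tendsto (fun n : ℕ => β n * Real.log n) atTop atTop) :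
    ∀ᶠ n : ℕ in atTop,
      binomLowerTail ⌊0.99 * (n : ℝ)⌋₊ (0.49 * β n * Real.log n / n)
          (β n / 20 * Real.log n)
        < (n : ℝ) ^ (-0.258 * β n) := by
  filter_upwards [hβlog.eventually_gt_atTop 0, eventually_ge_atTop 100] with n hL hn
  obtain ⟨hb0, hb1⟩ := hβ n
  have hn' : (100 : ℝ) ≤ n := by exact_mod_cast hn
  have hn0 : (0 : ℝ) < n := by linarith
  have hlog : Real.log n ≤ n := (Real.log_le_sub_one_of_pos hn0).trans (by linarith)
  have hlog0 : 0 ≤ Real.log n := Real.log_nonneg (by linarith)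
  set L := β n * Real.log n with hLdef
  have hLn : L ≤ n := by nlinarith
  set q := 0.49 * β n * Real.log n / n with hq
  have hqn : q * n = 0.49 * L := by
    rw [hq, hLdef]
    field_simp
  have hq0 : 0 ≤ q := by positivity
  have hq1 : q ≤ 1 := by
    rw [hq, div_le_one hn0]
    nlinarith
  have hqs : q ≤ 0.0049 * L := by nlinarith
  refine (binomLowerTail_le_aux _ _ _ hq0 hq1).trans_lt ?_
  rw [Real.rpow_def_of_pos hn0, Real.exp_lt_exp]
  have he : Real.exp (-2) ≤ 0.14 := by
    have h1 := Real.exp_one_gt_d9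
    have h2 : Real.exp 2 = Real.exp 1 * Real.exp 1 := by
      rw [← Real.exp_add]
      norm_num
    rw [Real.exp_neg, h2]
    apply inv_le_of_inv_le₀ (by norm_num)
    norm_num
    nlinarith
  have hm : 0.99 * (n : ℝ) - 1 ≤ (⌊0.99 * (n : ℝ)⌋₊ : ℝ) := by
    have := Nat.lt_floor_add_one (0.99 * (n : ℝ))
    linarith
  set m : ℝ := (⌊0.99 * (n : ℝ)⌋₊ : ℝ)
  have hmq : 0.48 * L ≤ m * q := by nlinarith
  have hfin : 0.48 * L * 0.86 ≤ m * q * (1 - Real.exp (-2)) := by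
    apply mul_le_mul hmq (by linarith) (by norm_num)
    linarith
  have e1 : 2 * (β n / 20 * Real.log n) = 0.1 * L := by
    rw [hLdef]
    ring
  have e2 : Real.log n * (-0.258 * β n) = -0.258 * L := by
    rw [hLdef]
    ring
  rw [e1, e2]
  linarith
end

section
/- Let ε = ε(n) and θ = θ(n) satisfy 100/√(log log n) < ε, θ ≤ 1, let p = (1+ε)·log(n)/n and κ = ⌈(1+θ)n⌉. Then with high probability, the randomly colored random graph G_{n,p,κ} contains a rainbow path on at least n − n/(log n)^{1/3} vertices. -/
open MeasureTheory Filter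

/-- The uniform probability measure on a finite set (zero measure if the set is empty). -/
noncomputable def uniformOn {α : Type*} [MeasurableSpace α] (s : Finset α) : Measure α :=
  if h : s.Nonempty then (PMF.uniformOfFinset s h).toMeasure else 0

instance {α : Type*} [MeasurableSpace α] (s : Finset α) : SigmaFinite (uniformOn s) := by
  unfold uniformOn
  split
  · infer_instance
  · infer_instance

/-- Independent uniformly random colors from `Fin κ` on each potential edge. -/
noncomputable def colorM (n κ : ℕ) : Measure (Sym2 (Fin n) → Fin κ) :=
  Measure.pi fun _ => uniformOn (Finset.univ : Finset (Fin κ))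

/-- The randomly colored random graph `G_{n,p,κ}`. -/
noncomputable def coloredGnp (n κ : ℕ) (p : ℝ) :
    Measure ((Sym2 (Fin n) → Bool) × (Sym2 (Fin n) → Fin κ)) :=
  (gnp n p).prod (colorM n κ)

/-- `ω, c` contain a rainbow path on `m` vertices: `m` distinct vertices
`f 0, f 1, …, f (m-1)` such that each consecutive edge is present in `ω` and the colors
of the `m - 1` path edges are pairwise distinct. -/
def HasRainbowPath {n κ : ℕ} (ω : Sym2 (Fin n) → Bool) (c : Sym2 (Fin n) → Fin κ)
    (m : ℕ) : Prop :=
  ∃ f : ℕ → Fin n,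
    (∀ i < m, ∀ j < m, f i = f j → i = j) ∧
    (∀ i, i + 1 < m → ω s(f i, f (i + 1)) = true) ∧
    (∀ i, i + 1 < m → ∀ j, j + 1 < m →
      c s(f i, f (i + 1)) = c s(f j, f (j + 1)) → i = j)


theorem rlp_resample {ι Z : Type*} [Fintype ι] [DecidableEq ι] [MeasurableSpace Z]
    (ν : Measure Z) [IsProbabilityMeasure ν] (e : ι) :
    Measure.map (fun q : Z × (ι → Z) => Function.update q.2 e q.1)
      (ν.prod (Measure.pi fun _ : ι => ν)) = Measure.pi fun _ : ι => ν := by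
  symm
  refine Measure.pi_eq fun s hs => ?_
  have hmeas : Measurable (fun q : Z × (ι → Z) => Function.update q.2 e q.1) := by
    rw [measurable_pi_iff]
    intro i
    by_cases h : i = e
    · subst h; simpa using measurable_fst
    · simp only [Function.update_of_ne h]; fun_prop
  rw [Measure.map_apply hmeas (MeasurableSet.univ_pi hs)]
  have : (fun q : Z × (ι → Z) => Function.update q.2 e q.1) ⁻¹' (Set.univ.pi s)
      = (s e) ×ˢ (Set.univ.pi (Function.update s e Set.univ)) := by
    ext q
    simp only [Set.mem_preimage, Set.mem_pi, Set.mem_univ, true_implies, Set.mem_prod]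
    constructor
    · intro h
      refine ⟨by simpa using h e, fun i => ?_⟩
      by_cases hi : i = e
      · subst hi; simp
      · simpa [Function.update_of_ne hi] using h i
    · rintro ⟨h1, h2⟩ i
      by_cases hi : i = e
      · subst hi; simpa using h1
      · simpa [Function.update_of_ne hi] using h2 i
  rw [this, Measure.prod_prod, Measure.pi_pi, ← Finset.mul_prod_erase _ _ (Finset.mem_univ e),
    ← Finset.mul_prod_erase Finset.univ (fun i => ν (s i)) (Finset.mem_univ e)]
  simp only [Function.update_self, measure_univ, one_mul]
  congr 1
  refine Finset.prod_congr rfl fun i hi => ?_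
  rw [Function.update_of_ne (Finset.ne_of_mem_erase hi)]

theorem rlp_tower {ι Z : Type*} [Fintype ι] [DecidableEq ι] [MeasurableSpace Z]
    [Finite Z] [MeasurableSingletonClass Z]
    (ν : Measure Z) [IsProbabilityMeasure ν] (bad : (ι → Z) → Prop) (R : Finset ι) (y : ι → Z)
    (e : ι) (he : e ∉ R) :
    (Measure.pi fun _ : ι => ν) {x | bad (R.piecewise y x)}
      = ∫⁻ z, (Measure.pi fun _ : ι => ν)
          {x | bad ((insert e R).piecewise (Function.update y e z) x)} ∂ν := by
  conv_lhs => rw [← rlp_resample ν e]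
  rw [Measure.map_apply Measurable.of_discrete (Set.toFinite _).measurableSet,
    Measure.prod_apply (Set.toFinite _).measurableSet]
  congr 1
  ext z
  congr 1
  ext x
  simp only [Set.mem_preimage, Set.mem_ofPred_eq]
  have : R.piecewise y (Function.update x e z)
      = (insert e R).piecewise (Function.update y e z) x := by
    ext1 i
    by_cases hi : i = e
    · subst hi; simp [Finset.piecewise, he]
    · simp [Finset.piecewise, hi]
  rw [this]

/-- Edges of the path listed by `U`. -/
def rlpEdges {n : ℕ} (U : List (Fin n)) : List (Sym2 (Fin n)) :=
  List.zipWith (fun a b => s(a, b)) U U.tail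

theorem rlp_length {n : ℕ} (U : List (Fin n)) : (rlpEdges U).length = U.length - 1 := by
  simp [rlpEdges]

theorem rlp_path {n κ : ℕ} (hn : 0 < n) (x : Sym2 (Fin n) → Bool × Fin κ) (U : List (Fin n))
    (hU : U.Nodup) (h1 : ∀ e ∈ rlpEdges U, (x e).1 = true)
    (h2 : ((rlpEdges U).map fun e => (x e).2).Nodup) :
    HasRainbowPath (fun e => (x e).1) (fun e => (x e).2) U.length := by
  have key : ∀ i (hi : i + 1 < U.length), ∃ h : i < (rlpEdges U).length,
      (rlpEdges U)[i] = s(U.getD i ⟨0, hn⟩, U.getD (i+1) ⟨0, hn⟩) := by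
    intro i hi
    have hl : i < (rlpEdges U).length := by rw [rlp_length]; omega
    refine ⟨hl, ?_⟩
    rw [List.getD_eq_getElem _ _ (by omega), List.getD_eq_getElem _ _ hi]
    simp [rlpEdges]
  refine ⟨fun i => U.getD i ⟨0, hn⟩, ?_, ?_, ?_⟩
  · intro i hi j hj h
    simp only [List.getD_eq_getElem _ _ hi, List.getD_eq_getElem _ _ hj] at h
    exact (hU.getElem_inj_iff).1 h
  · intro i hi
    obtain ⟨hl, he⟩ := key i hi
    have := h1 _ (List.getElem_mem hl)
    rw [he] at this
    exact this
  · intro i hi j hj h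
    obtain ⟨hl, he⟩ := key i hi
    obtain ⟨hl', he'⟩ := key j hj
    simp only at h
    rw [← he, ← he'] at h
    refine (h2.getElem_inj_iff (hi := by simpa using hl) (hj := by simpa using hl')).1 ?_
    simpa using h

theorem rlp_main {n κ : ℕ} (hn : 0 < n) (ν : Measure (Bool × Fin κ)) [IsProbabilityMeasure ν]
    (P : ℕ → Prop) (M : ℕ) (hM : ∀ u j, n = u + 2 * j → ¬ P u → M ≤ j * j) (ρ : ENNReal)
    (hρ : ∀ C : Finset (Fin κ), C.card ≤ n →
      ν {z | z.1 = true ∧ z.2 ∉ C} + 2 * ν {z | z.1 = true ∧ z.2 ∉ C}ᶜ ≤ 2 * ρ) (N : ℕ) :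
    ∀ (t : ℕ) (U : List (Fin n)) (T : Finset (Fin n)) (R : Finset (Sym2 (Fin n)))
      (y : Sym2 (Fin n) → Bool × Fin κ),
      t + 2 * T.card + U.length < N → U.Nodup → (∀ v ∈ U, v ∉ T) →
      (∀ e ∈ rlpEdges U, e ∈ R ∧ (y e).1 = true) →
      ((rlpEdges U).map fun e => (y e).2).Nodup →
      (∀ u w, u ∉ U → u ∉ T → w ∈ T → s(u, w) ∈ R) →
      R.card + t = M → n ≤ U.length + 2 * T.card →
      (Measure.pi fun _ => ν) {x | ¬ ∃ m, P m ∧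
        HasRainbowPath (fun e => (R.piecewise y x e).1) (fun e => (R.piecewise y x e).2) m}
        ≤ 2 ^ T.card * ρ ^ t := by
  induction N with
  | zero => intro t U T R y h; omega
  | succ N ih =>
  intro t U T R y hN hU hUT hE hC hS hR hcard
  rcases t with _ | t
  · refine prob_le_one.trans ?_
    rw [pow_zero, mul_one]
    exact one_le_pow_of_one_le' (by norm_num) _
  rcases hcard.eq_or_lt with heq | hlt
  · by_cases hP : P U.length
    · have : {x : Sym2 (Fin n) → Bool × Fin κ | ¬ ∃ m, P m ∧
        HasRainbowPath (fun e => (R.piecewise y x e).1) (fun e => (R.piecewise y x e).2) m}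
          = ∅ := by
        ext x
        simp only [Set.mem_ofPred_eq, Set.mem_empty_iff_false, iff_false, not_not]
        refine ⟨_, hP, rlp_path hn (R.piecewise y x) U hU ?_ ?_⟩
        · intro e he
          rw [Finset.piecewise_eq_of_mem _ _ _ (hE e he).1]
          exact (hE e he).2
        · have : (rlpEdges U).map (fun e => (R.piecewise y x e).2)
              = (rlpEdges U).map fun e => (y e).2 := by
            refine List.map_congr_left fun e he => ?_
            rw [Finset.piecewise_eq_of_mem _ _ _ (hE e he).1]
          rw [this]; exact hC
      rw [this]; simp
    · exfalso
      have h1 := hM _ _ heq hP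
      have hdis : Disjoint U.toFinset T := by
        rw [Finset.disjoint_left]; intro a ha; exact hUT a (by simpa using ha)
      set S : Finset (Fin n) := (U.toFinset ∪ T)ᶜ with hSdef
      have hSc : S.card = T.card := by
        rw [hSdef, Finset.card_compl, Finset.card_union_of_disjoint hdis,
          List.toFinset_card_of_nodup hU, Fintype.card_fin]
        omega
      have hle : (S ×ˢ T).card ≤ R.card := by
        refine Finset.card_le_card_of_injOn (fun q => s(q.1, q.2)) ?_ ?_
        · intro q hq
          simp only [Finset.coe_product, Set.mem_prod, Finset.mem_coe, hSdef, Finset.mem_compl,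
            Finset.mem_union, List.mem_toFinset, not_or] at hq
          exact hS _ _ hq.1.1 hq.1.2 hq.2
        · intro q hq q' hq' h
          simp only [Finset.coe_product, Set.mem_prod, Finset.mem_coe, hSdef, Finset.mem_compl,
            Finset.mem_union, List.mem_toFinset, not_or] at hq hq'
          simp only [Sym2.eq_iff] at h
          rcases h with h | h
          · exact Prod.ext h.1 h.2
          · exact absurd (h.1 ▸ hq'.2) hq.1.2
      rw [Finset.card_product, hSc] at hle
      omega
  rcases U with _ | ⟨v, U⟩
  · -- push a root
    have hT : T.Nonempty := by
      rw [← Finset.card_pos]; simp at hlt; omega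
    obtain ⟨w, hw⟩ := hT
    have hc := Finset.card_erase_add_one hw
    refine (ih (t + 1) [w] (T.erase w) R y ?_ ?_ ?_ ?_ ?_ ?_ hR ?_).trans ?_
    · simp at hN ⊢; omega
    · simp
    · simp
    · simp [rlpEdges]
    · simp [rlpEdges]
    · intro u w' h1 h2 h3
      refine hS u w' (by simp) ?_ (Finset.mem_of_mem_erase h3)
      intro h
      apply h2
      rw [Finset.mem_erase]
      exact ⟨by simpa using h1, h⟩
    · simp at hlt ⊢; omega
    · gcongr
      · norm_num
      · exact Finset.erase_subset _ _
  by_cases hq : ∃ w ∈ T, s(w, v) ∉ R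
  · obtain ⟨w, hw, he⟩ := hq
    have hc := Finset.card_erase_add_one hw
    rw [rlp_tower ν (fun x => ¬ ∃ m, P m ∧
        HasRainbowPath (fun e => (x e).1) (fun e => (x e).2) m) R y _ he]
    set C : Finset (Fin κ) := ((rlpEdges (v :: U)).map fun e => (y e).2).toFinset with hCdef
    have hCc : C.card ≤ n := by
      refine (List.toFinset_card_le _).trans ?_
      rw [List.length_map, rlp_length]
      have := hU.length_le_card
      rw [Fintype.card_fin] at this
      omega
    set G : Set (Bool × Fin κ) := {z | z.1 = true ∧ z.2 ∉ C} with hG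
    have hGm : MeasurableSet G := (Set.toFinite _).measurableSet
    have hRc : (insert s(w, v) R).card + t = M := by
      rw [Finset.card_insert_of_notMem he]; omega
    have hup : ∀ z, ∀ e ∈ rlpEdges (v :: U), Function.update y s(w, v) z e = y e := by
      intro z e h
      rw [Function.update_of_ne]
      rintro rfl
      exact he (hE _ h).1
    have hmap : ∀ z, (rlpEdges (v :: U)).map (fun e => (Function.update y s(w, v) z e).2)
        = (rlpEdges (v :: U)).map fun e => (y e).2 := by
      intro z
      refine List.map_congr_left fun e h => ?_
      rw [hup z e h]
    rw [← lintegral_add_compl _ hGm]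
    have hg : ∀ z ∈ G, (Measure.pi fun _ => ν) {x | ¬ ∃ m, P m ∧
        HasRainbowPath
          (fun e => ((insert s(w, v) R).piecewise (Function.update y s(w, v) z) x e).1)
          (fun e => ((insert s(w, v) R).piecewise (Function.update y s(w, v) z) x e).2) m}
        ≤ 2 ^ (T.erase w).card * ρ ^ t := by
      intro z hz
      have hE2 : rlpEdges (w :: v :: U) = s(w, v) :: rlpEdges (v :: U) := rfl
      refine ih t (w :: v :: U) (T.erase w) (insert s(w, v) R) _ ?_ ?_ ?_ ?_ ?_ ?_ hRc ?_
      · simp at hN ⊢; omega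
      · rw [List.nodup_cons]
        exact ⟨fun h => hUT _ h hw, hU⟩
      · intro a ha h
        rw [Finset.mem_erase] at h
        rcases List.mem_cons.1 ha with rfl | ha
        · exact h.1 rfl
        · exact hUT a ha h.2
      · intro e h
        rw [hE2] at h
        rcases List.mem_cons.1 h with rfl | h
        · simpa using hz.1
        · rw [hup z e h]
          exact ⟨Finset.mem_insert_of_mem (hE e h).1, (hE e h).2⟩
      · rw [hE2, List.map_cons, hmap, List.nodup_cons, Function.update_self]
        exact ⟨fun h => hz.2 (by rw [hCdef, List.mem_toFinset]; exact h), hC⟩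
      · intro a b h1 h2 h3
        refine Finset.mem_insert_of_mem (hS a b ?_ ?_ (Finset.mem_of_mem_erase h3))
        · exact fun h => h1 (List.mem_cons_of_mem _ h)
        · intro h
          refine h2 (Finset.mem_erase.2 ⟨?_, h⟩)
          rintro rfl
          exact h1 List.mem_cons_self
      · simp at hlt ⊢; omega
    have hb : ∀ z ∈ Gᶜ, (Measure.pi fun _ => ν) {x | ¬ ∃ m, P m ∧
        HasRainbowPath
          (fun e => ((insert s(w, v) R).piecewise (Function.update y s(w, v) z) x e).1)
          (fun e => ((insert s(w, v) R).piecewise (Function.update y s(w, v) z) x e).2) m}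
        ≤ 2 ^ T.card * ρ ^ t := by
      intro z hz
      refine ih t (v :: U) T (insert s(w, v) R) _ ?_ hU hUT ?_ ?_ ?_ hRc hcard
      · omega
      · intro e h
        rw [hup z e h]
        exact ⟨Finset.mem_insert_of_mem (hE e h).1, (hE e h).2⟩
      · rw [hmap]; exact hC
      · intro a b h1 h2 h3
        exact Finset.mem_insert_of_mem (hS a b h1 h2 h3)
    calc _ ≤ 2 ^ (T.erase w).card * ρ ^ t * ν G + 2 ^ T.card * ρ ^ t * ν Gᶜ := by
            refine add_le_add ?_ ?_
            · refine (setLIntegral_mono' hGm hg).trans ?_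
              rw [setLIntegral_const]
            · refine (setLIntegral_mono' hGm.compl hb).trans ?_
              rw [setLIntegral_const]
      _ = 2 ^ (T.erase w).card * ρ ^ t * (ν G + 2 * ν Gᶜ) := by
            rw [← hc]; ring
      _ ≤ 2 ^ (T.erase w).card * ρ ^ t * (2 * ρ) := by gcongr; exact hρ C hCc
      _ = _ := by rw [← hc]; ring
  · -- pop
    push Not at hq
    refine ih (t + 1) U T R y ?_ ?_ ?_ ?_ ?_ ?_ hR ?_
    · simp at hN ⊢; omega
    · exact (List.nodup_cons.1 hU).2
    · intro a ha; exact hUT a (List.mem_cons_of_mem _ ha)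
    · intro e h
      refine hE e ?_
      cases U with
      | nil => simp [rlpEdges] at h
      | cons b U => exact List.mem_cons_of_mem _ h
    · cases U with
      | nil => simp [rlpEdges]
      | cons b U =>
        have hE2 : rlpEdges (v :: b :: U) = s(v, b) :: rlpEdges (b :: U) := rfl
        rw [hE2, List.map_cons, List.nodup_cons] at hC
        exact hC.2
    · intro a b h1 h2 h3
      by_cases hav : a = v
      · subst hav
        rw [Sym2.eq_swap]; exact hq b h3
      · exact hS a b (by simp [hav, h1]) h2 h3
    · simp at hlt ⊢; omega


instance rlp_uniform_prob {κ : ℕ} [NeZero κ] :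
    IsProbabilityMeasure (uniformOn (Finset.univ : Finset (Fin κ))) := by
  unfold uniformOn
  rw [dif_pos Finset.univ_nonempty]
  infer_instance

theorem rlp_bern (p : ℝ) (hp1 : p ≤ 1) :
    bernoulliM p {true} = ENNReal.ofReal p := by
  unfold bernoulliM
  rw [PMF.toMeasure_apply_singleton _ _ (measurableSet_singleton _)]
  have : min (Real.toNNReal p) 1 = Real.toNNReal p :=
    min_eq_left (by simpa using hp1)
  simp only [this, ENNReal.ofReal]
  rfl

theorem rlp_unif {κ : ℕ} [NeZero κ] (C : Finset (Fin κ)) :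
    uniformOn (Finset.univ : Finset (Fin κ)) {k | k ∉ C} = ((κ - C.card : ℕ) : ENNReal) / κ := by
  unfold uniformOn
  rw [dif_pos Finset.univ_nonempty,
    PMF.toMeasure_uniformOfFinset_apply]
  · simp [Finset.filter_not, Finset.card_sdiff]
  · exact (Set.toFinite _).measurableSet

theorem rlp_step {n κ : ℕ} [NeZero κ] (p q : ℝ) (hp0 : 0 ≤ p) (hp1 : p ≤ 1)
    (hq2 : q ≤ 2) (hq : q ≤ p * (1 - n / κ)) (C : Finset (Fin κ)) (hC : C.card ≤ n) :
    ((bernoulliM p).prod (uniformOn (Finset.univ : Finset (Fin κ))))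
      {z | z.1 = true ∧ z.2 ∉ C} + 2 * ((bernoulliM p).prod (uniformOn Finset.univ))
      {z | z.1 = true ∧ z.2 ∉ C}ᶜ ≤ 2 * ENNReal.ofReal (1 - q / 2) := by
  set ν := ((bernoulliM p).prod (uniformOn (Finset.univ : Finset (Fin κ)))) with hν
  have hm : MeasurableSet {z : Bool × Fin κ | z.1 = true ∧ z.2 ∉ C} :=
    (Set.toFinite _).measurableSet
  have hset : {z : Bool × Fin κ | z.1 = true ∧ z.2 ∉ C} = {true} ×ˢ {k | k ∉ C} := by
    ext z; simp
  have hκ : (0 : ℝ) < κ := by exact_mod_cast NeZero.pos κ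
  have hCκ : C.card ≤ κ := by simpa using Finset.card_le_univ C
  have hval : ν.real {z : Bool × Fin κ | z.1 = true ∧ z.2 ∉ C} = p * (1 - C.card / κ) := by
    rw [measureReal_def, hset, hν, Measure.prod_prod, rlp_bern p hp1, rlp_unif,
      ENNReal.toReal_mul, ENNReal.toReal_ofReal hp0, ENNReal.toReal_div]
    simp only [ENNReal.toReal_natCast]
    rw [Nat.cast_sub hCκ]
    field_simp
  have hge : q ≤ ν.real {z : Bool × Fin κ | z.1 = true ∧ z.2 ∉ C} := by
    rw [hval]
    refine hq.trans ?_
    gcongr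
  have hc := probReal_compl_eq_one_sub (μ := ν) hm
  rw [← ofReal_measureReal, ← ofReal_measureReal, hc,
    show (2 : ENNReal) = ENNReal.ofReal 2 by simp,
    ← ENNReal.ofReal_mul (by norm_num), ← ENNReal.ofReal_mul (by norm_num),
    ← ENNReal.ofReal_add (by positivity) (by
      have : ν.real {z : Bool × Fin κ | z.1 = true ∧ z.2 ∉ C} ≤ 1 := measureReal_le_one
      linarith)]
  apply ENNReal.ofReal_le_ofReal
  linarith

theorem rlp_bound {n κ : ℕ} (hn : 0 < n) [NeZero κ] (p q : ℝ) (hp0 : 0 ≤ p) (hp1 : p ≤ 1)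
    (hq2 : q ≤ 2) (hq : q ≤ p * (1 - n / κ)) (P : ℕ → Prop) (M : ℕ)
    (hM : ∀ u j, n = u + 2 * j → ¬ P u → M ≤ j * j) :
    coloredGnp n κ p {x | ¬ ∃ m, P m ∧ HasRainbowPath x.1 x.2 m}
      ≤ ENNReal.ofReal (2 ^ n * (1 - q / 2) ^ M) := by
  set ν := ((bernoulliM p).prod (uniformOn (Finset.univ : Finset (Fin κ)))) with hν
  have hmp := measurePreserving_arrowProdEquivProdArrow Bool (Fin κ) (Sym2 (Fin n))
    (fun _ => bernoulliM p) (fun _ => uniformOn Finset.univ)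
  have h := rlp_main hn ν P M hM (ENNReal.ofReal (1 - q / 2))
    (fun C hC => rlp_step p q hp0 hp1 hq2 hq C hC) (M + 2 * n + 1) M [] Finset.univ ∅
    (fun _ => (true, 0)) (by simp) (by simp) (by simp) (by simp [rlpEdges])
    (by simp [rlpEdges]) (by simp) (by simp) (by simp; omega)
  simp only [Finset.piecewise_empty, Finset.card_univ, Fintype.card_fin] at h
  unfold coloredGnp gnp colorM
  rw [← hmp.measure_preimage (Set.toFinite _).measurableSet.nullMeasurableSet]
  refine h.trans (le_of_eq ?_)
  rw [ENNReal.ofReal_mul (by positivity), ENNReal.ofReal_pow (by norm_num),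
    ENNReal.ofReal_pow (by linarith)]
  simp

/-- If `100/√(log log n) < ε, θ ≤ 1`, `p = (1+ε)·log n / n` and
`κ = ⌈(1+θ)n⌉`, then whp `G_{n,p,κ}` contains a rainbow path on at least
`n - n/(log n)^{1/3}` vertices. -/
theorem rainbow_long_path_whp (ε θ : ℕ → ℝ)
    (hε : ∀ᶠ n : ℕ in atTop,
      100 / Real.sqrt (Real.log (Real.log n)) < ε n ∧ ε n ≤ 1)
    (hθ : ∀ᶠ n : ℕ in atTop,
      100 / Real.sqrt (Real.log (Real.log n)) < θ n ∧ θ n ≤ 1) :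
    Tendsto
      (fun n : ℕ =>
        coloredGnp n ⌈(1 + θ n) * n⌉₊ ((1 + ε n) * Real.log n / n)
          {x | ∃ m : ℕ,
            (n : ℝ) - n / Real.log n ^ ((1 : ℝ) / 3) ≤ m ∧ HasRainbowPath x.1 x.2 m})
      atTop (nhds 1) := by
  have hLL : Tendsto (fun n : ℕ => Real.log (Real.log n)) atTop atTop :=
    Real.tendsto_log_atTop.comp (Real.tendsto_log_atTop.comp tendsto_natCast_atTop_atTop)
  have hL : Tendsto (fun n : ℕ => Real.log (n : ℝ)) atTop atTop :=
    Real.tendsto_log_atTop.comp tendsto_natCast_atTop_atTop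
  have hsmall : ∀ᶠ n : ℕ in atTop, 2 * Real.log (n : ℝ) ≤ n := by
    have h := Real.isLittleO_log_id_atTop.comp_tendsto (tendsto_natCast_atTop_atTop (R := ℝ))
    have h2 := h.bound (show (0 : ℝ) < 1 / 2 by norm_num)
    filter_upwards [h2] with n hn
    simp only [Function.comp, id, Real.norm_eq_abs, Nat.abs_cast] at hn
    have := le_abs_self (Real.log (n : ℝ))
    linarith
  have hmain : ∀ᶠ n : ℕ in atTop,
      1 - ENNReal.ofReal (Real.exp (-n)) ≤
        coloredGnp n ⌈(1 + θ n) * n⌉₊ ((1 + ε n) * Real.log n / n)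
          {x | ∃ m : ℕ,
            (n : ℝ) - n / Real.log n ^ ((1 : ℝ) / 3) ≤ m ∧ HasRainbowPath x.1 x.2 m} ∧
        coloredGnp n ⌈(1 + θ n) * n⌉₊ ((1 + ε n) * Real.log n / n)
          {x | ∃ m : ℕ,
            (n : ℝ) - n / Real.log n ^ ((1 : ℝ) / 3) ≤ m ∧ HasRainbowPath x.1 x.2 m} ≤ 1 := by
    filter_upwards [hε, hθ, hsmall, hLL.eventually_ge_atTop 1, hL.eventually_ge_atTop 1,
      eventually_gt_atTop 0] with n hεn hθn hsm hLLn hLn hn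
    have hn' : (0 : ℝ) < n := by exact_mod_cast hn
    set L := Real.log (Real.log (n : ℝ)) with hLdef
    set l := Real.log (n : ℝ) ^ ((1 : ℝ) / 3) with hl
    have hlog0 : 0 < Real.log (n : ℝ) := by linarith
    have hl0 : 0 < l := Real.rpow_pos_of_pos hlog0 _
    have hl3 : l ^ 3 = Real.log (n : ℝ) := by
      rw [hl, ← Real.rpow_natCast, ← Real.rpow_mul hlog0.le]; norm_num
    have hlL : L / 3 ≤ l := by
      rw [hl, Real.rpow_def_of_pos hlog0]
      have := Real.add_one_le_exp (L * (1 / 3))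
      linarith
    have hs1 : 1 ≤ Real.sqrt L := Real.one_le_sqrt.2 hLLn
    have hsL : Real.sqrt L * Real.sqrt L = L := Real.mul_self_sqrt (by linarith)
    have h100 : 0 < 100 / Real.sqrt L := by positivity
    have hθ0 : 0 < θ n := h100.trans hθn.1
    have hε0 : 0 < ε n := h100.trans hεn.1
    have hθl : 32 ≤ θ n * l := by
      have h1 : 100 < θ n * Real.sqrt L := by
        have := hθn.1
        rwa [div_lt_iff₀ (by linarith)] at this
      have h2 : Real.sqrt L ≤ L := by nlinarith
      have h3 : θ n * (L / 3) ≤ θ n * l := by gcongr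
      have h4 : θ n * Real.sqrt L ≤ θ n * L := by gcongr
      linarith
    set κ := ⌈(1 + θ n) * n⌉₊ with hκ
    have hκge : (1 + θ n) * n ≤ κ := Nat.le_ceil _
    have hκ0 : (0 : ℝ) < κ := lt_of_lt_of_le (by positivity) hκge
    haveI : NeZero κ := ⟨by rintro h; rw [h] at hκ0; simp at hκ0⟩
    set p := (1 + ε n) * Real.log n / n with hp
    have hp0 : 0 ≤ p := by positivity
    have hp1 : p ≤ 1 := by
      rw [hp, div_le_one hn']
      have := hεn.2
      nlinarith
    set q := Real.log n / n * (θ n / 2) with hqdef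
    have hq0 : 0 ≤ q := by positivity
    have hfrac : θ n / 2 ≤ 1 - n / κ := by
      have h1 : (n : ℝ) / κ ≤ 1 - θ n / 2 := by
        rw [div_le_iff₀ hκ0]
        have h2 : 0 ≤ 1 - θ n / 2 := by linarith [hθn.2]
        have h3 : (1 - θ n / 2) * ((1 + θ n) * n) ≤ (1 - θ n / 2) * κ := by gcongr
        have h4 : 0 ≤ θ n * (1 - θ n) * n :=
          mul_nonneg (mul_nonneg hθ0.le (by linarith [hθn.2])) hn'.le
        nlinarith
      linarith
    have hpge : Real.log n / n ≤ p := by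
      rw [hp]
      gcongr
      nlinarith
    have hq : q ≤ p * (1 - n / κ) := by
      rw [hqdef]
      gcongr
    have hq1 : q ≤ 1 := by
      have h1 : q ≤ 1 * (1 - n / κ) := hq.trans (by
        gcongr
        linarith)
      have : (0 : ℝ) ≤ n / κ := by positivity
      linarith
    have hM := rlp_bound (n := n) (κ := κ) hn p q hp0 hp1 (by linarith) hq
      (fun m => (n : ℝ) - n / l ≤ m) ⌈(n / (2 * l)) ^ 2⌉₊ (by
        intro u j huj hu
        rw [not_le] at hu
        apply Nat.ceil_le.2
        have h1 : (n : ℝ) = u + 2 * j := by exact_mod_cast huj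
        have h2 : (n : ℝ) / (2 * l) ≤ j := by
          have : (n : ℝ) / (2 * l) = n / l / 2 := by field_simp
          rw [this]; linarith
        push_cast
        rw [← sq]
        gcongr)
    set M := ⌈((n : ℝ) / (2 * l)) ^ 2⌉₊ with hMdef
    have hMge : ((n : ℝ) / (2 * l)) ^ 2 ≤ M := Nat.le_ceil _
    have hqM : 2 * (n : ℝ) ≤ q / 2 * M := by
      have h1 : q / 2 * ((n : ℝ) / (2 * l)) ^ 2 ≤ q / 2 * M := by gcongr
      have h2 : q / 2 * ((n : ℝ) / (2 * l)) ^ 2 = n * (θ n * l) / 16 := by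
        rw [hqdef, ← hl3]; field_simp; norm_num
      have h3 : (n : ℝ) * 32 ≤ n * (θ n * l) := by gcongr
      linarith
    have hexp : (2 : ℝ) ^ n * (1 - q / 2) ^ M ≤ Real.exp (-n) := by
      have h1 : (2 : ℝ) ^ n ≤ Real.exp n := by
        have : (2 : ℝ) ≤ Real.exp 1 := by have := Real.add_one_le_exp 1; linarith
        calc (2 : ℝ) ^ n ≤ Real.exp 1 ^ n := by gcongr
          _ = Real.exp n := by rw [← Real.exp_nat_mul]; simp
      have h2 : (1 - q / 2) ^ M ≤ Real.exp (-(2 * n)) := by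
        have h3 : 1 - q / 2 ≤ Real.exp (-(q / 2)) := by
          have := Real.add_one_le_exp (-(q / 2)); linarith
        calc (1 - q / 2) ^ M ≤ Real.exp (-(q / 2)) ^ M := by
              gcongr
              linarith
          _ = Real.exp (-(q / 2 * M)) := by rw [← Real.exp_nat_mul]; congr 1; ring
          _ ≤ _ := by apply Real.exp_le_exp.2; linarith
      calc (2 : ℝ) ^ n * (1 - q / 2) ^ M ≤ Real.exp n * Real.exp (-(2 * n)) := by
            gcongr
            apply pow_nonneg; linarith
        _ = Real.exp (-n) := by rw [← Real.exp_add]; congr 1; ring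
    haveI : IsProbabilityMeasure (coloredGnp n κ p) := by
      unfold coloredGnp gnp colorM; infer_instance
    refine ⟨?_, prob_le_one⟩
    have hA : MeasurableSet {x : (Sym2 (Fin n) → Bool) × (Sym2 (Fin n) → Fin κ) | ∃ m : ℕ,
            (n : ℝ) - n / l ≤ m ∧ HasRainbowPath x.1 x.2 m} :=
      (Set.toFinite _).measurableSet
    rw [tsub_le_iff_right, ← prob_add_prob_compl hA (μ := coloredGnp n κ p)]
    gcongr
    exact hM.trans (ENNReal.ofReal_le_ofReal hexp)
  refine tendsto_of_tendsto_of_tendsto_of_le_of_le' ?_ tendsto_const_nhds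
    (hmain.mono fun _ h => h.1) (hmain.mono fun _ h => h.2)
  have h0 : Tendsto (fun n : ℕ => ENNReal.ofReal (Real.exp (-(n : ℝ)))) atTop (nhds 0) := by
    have := ENNReal.tendsto_ofReal
      (Real.tendsto_exp_neg_atTop_nhds_zero.comp (tendsto_natCast_atTop_atTop (R := ℝ)))
    simpa using this
  simpa using ENNReal.Tendsto.sub (tendsto_const_nhds (x := (1 : ENNReal))) h0
    (Or.inl ENNReal.one_ne_top)
end

section
/- Let θ₁ = θ₁(n) ∈ (0,1], L = L(n) with L ≥ 7/θ₁ and L ≤ (log n)^{1/6}, and β = β(n) ≥ 277/(log log n). Let r = r(n) be a positive integer with r ≤ n/L. Suppose each of 2r agents independently samples a list of at least (β/(200L))·log n colors, each color chosen independently and uniformly at random from a palette of ⌊θ₁·n⌋ colors. Then with high probability it is possible to select 3 colors from each agent's list of sampled colors so that all 6r selected colors are pairwise distinct. -/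
open MeasureTheory Filter

/-- The sampling measure: `2r` agents, agent `a` independently samples a list of `ℓ a`
colors, each chosen independently and uniformly at random from a palette of `C` colors. -/
noncomputable def samplingM (r C : ℕ) (ℓ : Fin (2 * r) → ℕ) :
    Measure (∀ a : Fin (2 * r), Fin (ℓ a) → Fin C) :=
  Measure.pi fun a =>
    Measure.pi fun _ : Fin (ℓ a) => uniformOn (Finset.univ : Finset (Fin C))

/-- From each agent's sampled list one can select `3` colors occurring in the list so
that all `6r` selected colors are pairwise distinct. -/
def CanSelectThreeRainbow {r C : ℕ} {ℓ : Fin (2 * r) → ℕ}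
    (x : ∀ a : Fin (2 * r), Fin (ℓ a) → Fin C) : Prop :=
  ∃ sel : Fin (2 * r) → Finset (Fin C),
    (∀ a, (sel a).card = 3 ∧ ∀ col ∈ sel a, ∃ i, x a i = col) ∧
    ∀ a b, a ≠ b → Disjoint (sel a) (sel b)

lemma hall_three {r C : ℕ} {ℓ : Fin (2 * r) → ℕ}
    (x : ∀ a : Fin (2 * r), Fin (ℓ a) → Fin C)
    (h : ∀ S : Finset (Fin (2 * r)),
      3 * S.card ≤ (S.biUnion fun a => Finset.univ.image (x a)).card) :
    CanSelectThreeRainbow x := by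
  classical
  have key := (Finset.all_card_le_biUnion_card_iff_exists_injective
    (fun p : Fin (2 * r) × Fin 3 => Finset.univ.image (x p.1))).1 (by
      intro s
      have h1 : s.card ≤ 3 * (s.image Prod.fst).card := by
        have : s ⊆ (s.image Prod.fst) ×ˢ (Finset.univ : Finset (Fin 3)) := by
          intro p hp
          simp only [Finset.mem_product, Finset.mem_univ, and_true]
          exact Finset.mem_image_of_mem _ hp
        have := Finset.card_le_card this
        rw [Finset.card_product] at this
        simp at this
        omega
      refine h1.trans ((h _).trans ?_)
      rw [Finset.image_biUnion])
  obtain ⟨f, hf, hm⟩ := key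
  refine ⟨fun a => Finset.univ.image (fun j : Fin 3 => f (a, j)), ?_, ?_⟩
  · intro a
    constructor
    · rw [Finset.card_image_of_injective]
      · simp
      · intro i j hij
        have := hf hij
        simpa using this
    · intro col hcol
      simp only [Finset.mem_image, Finset.mem_univ, true_and] at hcol
      obtain ⟨j, rfl⟩ := hcol
      have := hm (a, j)
      simpa using this
  · intro a b hab
    rw [Finset.disjoint_left]
    intro c hc hc'
    simp only [Finset.mem_image, Finset.mem_univ, true_and] at hc hc'
    obtain ⟨i, rfl⟩ := hc
    obtain ⟨j, hj⟩ := hc'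
    have := hf hj
    simp only [Prod.mk.injEq] at this
    exact hab this.1.symm

lemma uniform_prob {C : ℕ} (hC : 0 < C) :
    IsProbabilityMeasure (uniformOn (Finset.univ : Finset (Fin C))) := by
  have : (Finset.univ : Finset (Fin C)).Nonempty := ⟨⟨0, hC⟩, Finset.mem_univ _⟩
  unfold uniformOn
  rw [dif_pos this]
  infer_instance

lemma uniform_apply {C : ℕ} (hC : 0 < C) (T : Finset (Fin C)) :
    uniformOn (Finset.univ : Finset (Fin C)) (T : Set (Fin C))
      = ENNReal.ofReal ((T.card : ℝ) / C) := by
  classical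
  have : (Finset.univ : Finset (Fin C)).Nonempty := ⟨⟨0, hC⟩, Finset.mem_univ _⟩
  unfold uniformOn
  rw [dif_pos this, PMF.toMeasure_uniformOfFinset_apply _ _ (Set.toFinite _).measurableSet]
  rw [ENNReal.ofReal_div_of_pos (by exact_mod_cast hC)]
  simp

lemma sampling_prob {r C : ℕ} (hC : 0 < C) (ℓ : Fin (2 * r) → ℕ) :
    IsProbabilityMeasure (samplingM r C ℓ) := by
  have := uniform_prob hC
  unfold samplingM
  infer_instance

lemma event_bound {r C s : ℕ} (hC : 0 < C) (ℓ : Fin (2 * r) → ℕ) (hs : ∀ a, s ≤ ℓ a)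
    (S : Finset (Fin (2 * r))) (T : Finset (Fin C)) :
    samplingM r C ℓ {x | ∀ a ∈ S, ∀ i, x a i ∈ T}
      ≤ ENNReal.ofReal (((T.card : ℝ) / C) ^ (S.card * s)) := by
  classical
  have := uniform_prob hC
  have hset : {x : ∀ a : Fin (2 * r), Fin (ℓ a) → Fin C | ∀ a ∈ S, ∀ i, x a i ∈ T}
      = Set.univ.pi (fun a => if a ∈ S then
          Set.univ.pi (fun _ : Fin (ℓ a) => (T : Set (Fin C))) else Set.univ) := by
    ext x
    simp only [Set.mem_ofPred_eq, Set.mem_pi, Set.mem_univ, true_imp_iff]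
    refine forall_congr' fun a => ?_
    by_cases ha : a ∈ S <;> simp [ha]
  have hle1 : (T.card : ℝ) / C ≤ 1 := by
    rw [div_le_one (by exact_mod_cast hC)]
    have := Finset.card_le_univ T
    simp at this
    exact_mod_cast this
  have h0 : 0 ≤ (T.card : ℝ) / C := by positivity
  rw [hset]
  unfold samplingM
  rw [Measure.pi_pi]
  have : ∀ a, (Measure.pi fun _ : Fin (ℓ a) => uniformOn (Finset.univ : Finset (Fin C)))
      (if a ∈ S then Set.univ.pi (fun _ : Fin (ℓ a) => (T : Set (Fin C))) else Set.univ)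
      ≤ if a ∈ S then ENNReal.ofReal (((T.card : ℝ) / C) ^ s) else 1 := by
    intro a
    by_cases ha : a ∈ S
    · simp only [ha, if_true]
      rw [Measure.pi_pi]
      simp only [uniform_apply hC, Finset.prod_const, Finset.card_univ, Fintype.card_fin]
      rw [← ENNReal.ofReal_pow h0]
      exact ENNReal.ofReal_le_ofReal (pow_le_pow_of_le_one h0 hle1 (hs a))
    · simp [ha]
  refine (Finset.prod_le_prod' fun a _ => this a).trans ?_
  rw [Finset.prod_ite_mem, Finset.univ_inter, Finset.prod_const,
    ← ENNReal.ofReal_pow (by positivity), ← pow_mul, mul_comm]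

lemma choose_bound (N j : ℕ) (hj : 0 < j) :
    (N.choose j : ℝ) ≤ (3 * ((N : ℝ) / j)) ^ j := by
  have h1 : (N.choose j : ℝ) ≤ (N : ℝ) ^ j / j.factorial := Nat.choose_le_pow_div j N
  have h2 : (j : ℝ) ^ j / j.factorial ≤ Real.exp j :=
    Real.pow_div_factorial_le_exp _ (by positivity) _
  have h3 : Real.exp j ≤ 3 ^ j := by
    rw [← Real.exp_one_pow]
    exact pow_le_pow_left₀ (Real.exp_pos _).le (by linarith [Real.exp_one_lt_d9]) _
  have hj' : (0 : ℝ) < j := by exact_mod_cast hj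
  refine h1.trans ?_
  have : (N : ℝ) ^ j / j.factorial = ((N : ℝ) / j) ^ j * ((j : ℝ) ^ j / j.factorial) := by
    rw [div_pow]
    field_simp
  rw [this, mul_pow, mul_comm]
  exact mul_le_mul_of_nonneg_right (h2.trans h3) (by positivity)

lemma term_bound {r C s k : ℕ} (hC : 0 < C) (hrC : 7 * r ≤ C) (hs : 4 ≤ s)
    (hk : 0 < k) (hk2 : k ≤ 2 * r) :
    ((2 * r).choose k : ℝ) * ((C.choose (3 * k) : ℝ) *
      (((3 * k : ℕ) : ℝ) / C) ^ (k * s)) ≤ (81 * (6 / 7 : ℝ) ^ (s - 4)) ^ k := by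
  have hk' : (0 : ℝ) < k := by exact_mod_cast hk
  have hC' : (0 : ℝ) < C := by exact_mod_cast hC
  have hrC' : (7 : ℝ) * r ≤ C := by exact_mod_cast hrC
  have hk2' : (k : ℝ) ≤ 2 * r := by exact_mod_cast hk2
  have h1 := choose_bound (2 * r) k hk
  have h2 := choose_bound C (3 * k) (by omega)
  obtain ⟨y, hy⟩ : ∃ y : ℝ, y = ((3 * k : ℕ) : ℝ) / C := ⟨_, rfl⟩
  have hy0 : 0 < y := by rw [hy]; positivity
  have hy1 : y ≤ 6 / 7 := by
    rw [hy, div_le_iff₀ hC']; push_cast; linarith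
  have e1 : ((C : ℕ) : ℝ) / ((3 * k : ℕ) : ℝ) = 1 / y := by rw [hy, one_div_div]
  have e2 : ((2 * r : ℕ) : ℝ) / k ≤ 1 / y := by
    rw [hy, one_div_div]; push_cast
    rw [div_le_div_iff₀ hk' (by positivity)]
    nlinarith
  rw [e1] at h2
  rw [← hy]
  have h1' : ((2 * r).choose k : ℝ) ≤ (3 * (1 / y)) ^ k :=
    h1.trans (pow_le_pow_left₀ (by positivity) (by linarith) _)
  obtain ⟨t, rfl⟩ := Nat.exists_eq_add_of_le hs
  have hfin : (3 * (1 / y)) ^ k * ((3 * (1 / y)) ^ (3 * k) * y ^ (k * (4 + t)))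
      = (81 * y ^ t) ^ k := by
    rw [pow_mul (3 * (1 / y)) 3 k, mul_comm k (4 + t), pow_mul y, ← mul_pow, ← mul_pow]
    congr 1
    rw [pow_add]
    field_simp
    norm_num
  calc _ ≤ (3 * (1 / y)) ^ k * ((3 * (1 / y)) ^ (3 * k) * y ^ (k * (4 + t))) := by
        gcongr
    _ = (81 * y ^ t) ^ k := hfin
    _ ≤ _ := by
        rw [Nat.add_sub_cancel_left]
        gcongr

lemma bad_bound_s15 {r C s : ℕ} (hC : 0 < C) (hrC : 7 * r ≤ C) (hs : 4 ≤ s)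
    (ℓ : Fin (2 * r) → ℕ) (hℓ : ∀ a, s ≤ ℓ a) (hε : 81 * (6 / 7 : ℝ) ^ (s - 4) ≤ 1 / 2) :
    samplingM r C ℓ {x | CanSelectThreeRainbow x}ᶜ
      ≤ ENNReal.ofReal (2 * (81 * (6 / 7 : ℝ) ^ (s - 4))) := by
  classical
  set ε : ℝ := 81 * (6 / 7 : ℝ) ^ (s - 4) with hεd
  have hε0 : 0 ≤ ε := by positivity
  have hsub : ({x | CanSelectThreeRainbow x}ᶜ : Set (∀ a : Fin (2 * r), Fin (ℓ a) → Fin C)) ⊆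
      ⋃ k ∈ Finset.Icc 1 (2 * r), ⋃ S ∈ Finset.powersetCard k (Finset.univ : Finset (Fin (2 * r))),
        ⋃ T ∈ Finset.powersetCard (3 * k) (Finset.univ : Finset (Fin C)),
          {x | ∀ a ∈ S, ∀ i, x a i ∈ T} := by
    intro x hx
    have : ¬ ∀ S : Finset (Fin (2 * r)),
      3 * S.card ≤ (S.biUnion fun a => Finset.univ.image (x a)).card :=
      fun h => hx (hall_three x h)
    push Not at this
    obtain ⟨S, hS⟩ := this
    have hS2 : S.card ≤ 2 * r := by simpa using Finset.card_le_univ S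
    obtain ⟨T, hT, hTc⟩ := Finset.exists_superset_card_eq (n := 3 * S.card) hS.le
      (by simp; omega)
    simp only [Set.mem_iUnion, Finset.mem_Icc, Finset.mem_powersetCard, Set.mem_ofPred_eq]
    refine ⟨S.card, ⟨by omega, hS2⟩, S, ⟨Finset.subset_univ _, rfl⟩, T,
      ⟨Finset.subset_univ _, hTc⟩, ?_⟩
    intro a ha i
    apply hT
    simp only [Finset.mem_biUnion, Finset.mem_image, Finset.mem_univ, true_and]
    exact ⟨a, ha, i, rfl⟩
  have hk : ∀ k ∈ Finset.Icc 1 (2 * r), samplingM r C ℓ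
      (⋃ S ∈ Finset.powersetCard k (Finset.univ : Finset (Fin (2 * r))),
        ⋃ T ∈ Finset.powersetCard (3 * k) (Finset.univ : Finset (Fin C)),
          {x | ∀ a ∈ S, ∀ i, x a i ∈ T}) ≤ ENNReal.ofReal (ε ^ k) := by
    intro k hk
    rw [Finset.mem_Icc] at hk
    have hT : ∀ S ∈ Finset.powersetCard k (Finset.univ : Finset (Fin (2 * r))), samplingM r C ℓ
        (⋃ T ∈ Finset.powersetCard (3 * k) (Finset.univ : Finset (Fin C)),
          {x | ∀ a ∈ S, ∀ i, x a i ∈ T}) ≤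
        ENNReal.ofReal ((C.choose (3 * k) : ℝ) * (((3 * k : ℕ) : ℝ) / C) ^ (k * s)) := by
      intro S hS
      rw [Finset.mem_powersetCard] at hS
      refine (measure_biUnion_finset_le _ _).trans ?_
      refine (Finset.sum_le_card_nsmul _ _
        (ENNReal.ofReal ((((3 * k : ℕ) : ℝ) / C) ^ (k * s))) ?_).trans ?_
      · intro T hT
        rw [Finset.mem_powersetCard] at hT
        have := event_bound hC ℓ hℓ S T
        rwa [hT.2, hS.2] at this
      · rw [Finset.card_powersetCard, Finset.card_univ, Fintype.card_fin, nsmul_eq_mul,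
          ENNReal.ofReal_mul (by positivity), ENNReal.ofReal_natCast]
    refine (measure_biUnion_finset_le _ _).trans ?_
    refine (Finset.sum_le_card_nsmul _ _ _ hT).trans ?_
    rw [Finset.card_powersetCard, Finset.card_univ, Fintype.card_fin, nsmul_eq_mul,
      ← ENNReal.ofReal_natCast, ← ENNReal.ofReal_mul (by positivity)]
    exact ENNReal.ofReal_le_ofReal (term_bound hC hrC hs hk.1 hk.2)
  refine (measure_mono hsub).trans ((measure_biUnion_finset_le _ _).trans ?_)
  refine (Finset.sum_le_sum hk).trans ?_
  rw [← ENNReal.ofReal_sum_of_nonneg (fun _ _ => by positivity)]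
  apply ENNReal.ofReal_le_ofReal
  have hgen : ∀ N : ℕ, ∑ k ∈ Finset.Icc 1 N, ε ^ k ≤ 2 * ε - 2 * (ε * ε ^ N) := by
    intro N
    induction N with
    | zero => simp
    | succ N ih =>
      rw [Finset.sum_Icc_succ_top (by omega)]
      have : 0 ≤ ε ^ N * ε := by positivity
      rw [pow_succ]
      nlinarith [mul_le_mul_of_nonneg_left hε this]
  have := hgen (2 * r)
  have h2 : 0 ≤ ε * ε ^ (2 * r) := by positivity
  linarith

lemma growth : Tendsto (fun n : ℕ =>
    (277 / 200 : ℝ) * (Real.log n ^ ((5 : ℝ) / 6) / Real.log (Real.log n))) atTop atTop := by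
  have h1 : Tendsto (fun n : ℕ => Real.log (n : ℝ)) atTop atTop :=
    Real.tendsto_log_atTop.comp tendsto_natCast_atTop_atTop
  have h2 : Tendsto (fun x : ℝ => x ^ ((5 : ℝ) / 6) / Real.log x) atTop atTop := by
    have ho := isLittleO_log_rpow_atTop (r := (5 : ℝ) / 6) (by norm_num)
    have h3 := ho.tendsto_div_nhds_zero
    have h4 : Tendsto (fun x : ℝ => Real.log x / x ^ ((5 : ℝ) / 6)) atTop (nhdsWithin 0 (Set.Ioi 0)) := by
      rw [tendsto_nhdsWithin_iff]
      refine ⟨h3, ?_⟩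
      filter_upwards [eventually_gt_atTop 1] with x hx
      have hl := Real.log_pos hx
      have : (0 : ℝ) < x ^ ((5 : ℝ) / 6) := Real.rpow_pos_of_pos (by linarith) _
      exact div_pos hl this
    have h5 := h4.inv_tendsto_nhdsGT_zero
    refine h5.congr fun x => ?_
    simp
  exact (h2.comp h1).const_mul_atTop (by norm_num)

/-- Let `θ₁ ∈ (0,1]`, `7/θ₁ ≤ L ≤ (log n)^{1/6}`,
`β ≥ 277/(log log n)`, and let `r` be a positive integer with `r ≤ n/L`.  If each of `2r`
agents independently samples at least `(β/(200L))·log n` colors uniformly at random from a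
palette of `⌊θ₁·n⌋` colors, then whp one can select `3` colors from each agent's list with
all `6r` selected colors pairwise distinct. -/
theorem select_three_rainbow_whp (θ₁ L β : ℕ → ℝ) (r : ℕ → ℕ)
    (ℓ : ∀ n : ℕ, Fin (2 * r n) → ℕ)
    (hθ : ∀ᶠ n : ℕ in atTop, 0 < θ₁ n ∧ θ₁ n ≤ 1)
    (hL : ∀ᶠ n : ℕ in atTop, 7 / θ₁ n ≤ L n ∧ L n ≤ Real.log n ^ ((1 : ℝ) / 6))
    (hβ : ∀ᶠ n : ℕ in atTop, 277 / Real.log (Real.log n) ≤ β n)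
    (hr : ∀ᶠ n : ℕ in atTop, 0 < r n ∧ (r n : ℝ) ≤ n / L n)
    (hℓ : ∀ᶠ n : ℕ in atTop, ∀ a : Fin (2 * r n),
      β n / (200 * L n) * Real.log n ≤ ℓ n a) :
    Tendsto
      (fun n : ℕ =>
        samplingM (r n) ⌊θ₁ n * n⌋₊ (ℓ n) {x | CanSelectThreeRainbow x})
      atTop (nhds 1) := by

  obtain ⟨s, hs⟩ : ∃ s : ℕ → ℕ, s = fun n : ℕ => ⌊(277 / 200 : ℝ) *
    (Real.log n ^ ((5 : ℝ) / 6) / Real.log (Real.log n))⌋₊ := ⟨_, rfl⟩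
  have hst : Tendsto s atTop atTop := by
    rw [hs]; exact tendsto_nat_floor_atTop.comp growth
  have hεt : Tendsto (fun n => 2 * (81 * (6 / 7 : ℝ) ^ (s n - 4))) atTop (nhds 0) := by
    have h1 : Tendsto (fun n => s n - 4) atTop atTop := (tendsto_sub_atTop_nat 4).comp hst
    have h2 := (tendsto_pow_atTop_nhds_zero_of_lt_one (r := (6 / 7 : ℝ))
      (by norm_num) (by norm_num)).comp h1
    have h3 := (h2.const_mul 81).const_mul 2
    simpa using h3
  have hlog : Tendsto (fun n : ℕ => Real.log (n : ℝ)) atTop atTop :=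
    Real.tendsto_log_atTop.comp tendsto_natCast_atTop_atTop
  have hlow : Tendsto (fun n => 1 - ENNReal.ofReal (2 * (81 * (6 / 7 : ℝ) ^ (s n - 4))))
      atTop (nhds 1) := by
    have h := ENNReal.tendsto_ofReal hεt
    have h2 := ENNReal.Tendsto.sub (tendsto_const_nhds (x := (1 : ENNReal)) (f := atTop)) h
      (Or.inl ENNReal.one_ne_top)
    simpa using h2
  have hmain : ∀ᶠ n : ℕ in atTop, 0 < ⌊θ₁ n * n⌋₊ ∧
      samplingM (r n) ⌊θ₁ n * n⌋₊ (ℓ n) {x | CanSelectThreeRainbow x}ᶜ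
        ≤ ENNReal.ofReal (2 * (81 * (6 / 7 : ℝ) ^ (s n - 4))) := by
    filter_upwards [hθ, hL, hβ, hr, hℓ, hst.eventually_ge_atTop 4,
      hlog.eventually_gt_atTop 1, hεt.eventually_le_const (show (0 : ℝ) < 1 by norm_num)]
      with n hθ hL hβ hr hℓ hs4 hlog hε
    have hLpos : 0 < L n := lt_of_lt_of_le (by have := hθ.1; positivity) hL.1
    have hrC : 7 * r n ≤ ⌊θ₁ n * n⌋₊ := by
      apply Nat.le_floor
      push_cast
      have h1 : 7 ≤ L n * θ₁ n := (div_le_iff₀ hθ.1).1 hL.1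
      have h2 : (r n : ℝ) * L n ≤ n := (le_div_iff₀ hLpos).1 hr.2
      have h3 : (0 : ℝ) ≤ r n := by positivity
      have h4 := mul_le_mul_of_nonneg_left h1 h3
      have h5 := mul_le_mul_of_nonneg_right h2 hθ.1.le
      nlinarith
    have hC : 0 < ⌊θ₁ n * n⌋₊ := by have := hr.1; omega
    refine ⟨hC, bad_bound_s15 hC hrC hs4 (ℓ n) ?_ (by linarith)⟩
    intro a
    have hll : 0 < Real.log (Real.log n) := Real.log_pos hlog
    have hlp : 0 < Real.log n := by linarith
    have hp : 0 < Real.log n ^ ((5 : ℝ) / 6) := Real.rpow_pos_of_pos hlp _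
    have hq : 0 < Real.log n ^ ((1 : ℝ) / 6) := Real.rpow_pos_of_pos hlp _
    have hpq : Real.log n ^ ((5 : ℝ) / 6) * Real.log n ^ ((1 : ℝ) / 6) = Real.log n := by
      rw [← Real.rpow_add hlp]; norm_num
    have key : (277 / 200 : ℝ) * (Real.log n ^ ((5 : ℝ) / 6) / Real.log (Real.log n))
        ≤ ℓ n a := by
      refine le_trans ?_ (hℓ a)
      have h1 : Real.log n ^ ((5 : ℝ) / 6) ≤ Real.log n / L n := by
        rw [le_div_iff₀ hLpos, ← hpq]
        rw [hpq]
        calc _ ≤ Real.log n ^ ((5 : ℝ) / 6) * Real.log n ^ ((1 : ℝ) / 6) :=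
              mul_le_mul_of_nonneg_left hL.2 hp.le
          _ = _ := hpq
      calc _ = (277 / Real.log (Real.log n)) * (Real.log n ^ ((5 : ℝ) / 6)) / 200 := by ring
        _ ≤ β n * (Real.log n / L n) / 200 := by
            have : 0 < 277 / Real.log (Real.log n) := by positivity
            have hb : 0 ≤ β n := by linarith
            gcongr
        _ = _ := by field_simp
    rw [hs]
    exact Nat.floor_le_of_le key
  refine tendsto_of_tendsto_of_tendsto_of_le_of_le' hlow tendsto_const_nhds ?_ ?_
  · filter_upwards [hmain] with n hn
    have := sampling_prob hn.1 (ℓ n)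
    rw [tsub_le_iff_right]
    calc (1 : ENNReal) = samplingM (r n) ⌊θ₁ n * n⌋₊ (ℓ n) Set.univ := measure_univ.symm
      _ ≤ samplingM (r n) ⌊θ₁ n * n⌋₊ (ℓ n) {x | CanSelectThreeRainbow x} +
          samplingM (r n) ⌊θ₁ n * n⌋₊ (ℓ n) {x | CanSelectThreeRainbow x}ᶜ := by
        rw [← Set.union_compl_self {x | CanSelectThreeRainbow x}]
        exact measure_union_le _ _
      _ ≤ _ := by gcongr; exact hn.2
  · filter_upwards [hmain] with n hn
    have := sampling_prob hn.1 (ℓ n)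
    exact prob_le_one
end
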